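/- arXiv:1712.06821 — 12 statements merged into one kernel-verified Lean document; each statement's English description precedes it below -/
import Mathlib

section
/- The algebra D is a division ring (every nonzero element of D has a two-sided multiplicative inverse lying in D) if and only if a is not a norm from L. -/
open Matrix NumberField IsDedekindDomain

noncomputable section

section Defs

variable {L : Type*} [Field L]

/-- The matrix `g(l0,l1,l2)` of the cyclic presentation `D = L ⊕ Lz ⊕ Lz²`. -/
def gmat (ρ : L → L) (a l0 l1 l2 : L) : Matrix (Fin 3) (Fin 3) L :=
  !![l0, l1, l2;
     a * ρ l2, ρ l0, ρ l1;
     a * ρ (ρ l1), a * ρ (ρ l2), ρ (ρ l0)]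

/-- The norm `N_{L/E}(x) = x·ρ(x)·ρ²(x)`. -/
def NormLE (ρ : L → L) (x : L) : L := x * ρ x * ρ (ρ x)

/-- The trace `Tr_{L/E}(x) = x + ρ(x) + ρ²(x)`. -/
def TrLE (ρ : L → L) (x : L) : L := x + ρ x + ρ (ρ x)

/-- The unitary conditions (U1) and (U2) on the coefficients `(l0,l1,l2)`. -/
def IsUnitaryCoeffs (ρ τ : L → L) (a b l0 l1 l2 : L) : Prop :=
  l0 * τ l0 + ρ b * (l1 * τ l1) + ρ b * ρ (ρ b) * (l2 * τ l2) = 1 ∧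
  a * τ l0 * ρ l2 + ρ b * τ l1 * ρ l0 + ρ b * ρ (ρ b) * τ l2 * ρ l1 = 0

/-- The unitary conditions together with the determinant condition (Det). -/
def IsSpecialUnitaryCoeffs (ρ τ : L → L) (a b l0 l1 l2 : L) : Prop :=
  IsUnitaryCoeffs ρ τ a b l0 l1 l2 ∧
  NormLE ρ l0 + a * NormLE ρ l1 + a ^ 2 * NormLE ρ l2
    - a * TrLE ρ (l0 * ρ l1 * ρ (ρ l2)) = 1

/-- The involution of the second kind, on coefficients, realized as a matrix:
`α(g(l0,l1,l2)) = g(τ l0, a⁻¹·b·ρ²(b)·ρ(τ l2), a⁻¹·b·ρ²(τ l1))`. -/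
def alphaMat (ρ τ : L → L) (a b l0 l1 l2 : L) : Matrix (Fin 3) (Fin 3) L :=
  gmat ρ a (τ l0) (a⁻¹ * b * ρ (ρ b) * ρ (τ l2)) (a⁻¹ * b * ρ (ρ (τ l1)))

end Defs

/-!
Write `D = L ⊕ Lz ⊕ Lz²` with `z³ = a`. Left multiplication by `z` on coefficient vectors is the
`ρ`-semilinear map `Z w = (a ρ w₂, ρ w₀, ρ w₁)`, which satisfies `Z³ = a`, and the rows of
`g(l)` are `l, Z l, Z² l`.

If `a = N(x)`, then `g(-x,1,0)` has determinant `a - N(x) = 0`, so `D` has a nonzero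
non-invertible element.

Conversely, suppose `l ≠ 0` and `det g(l) = 0`. The row space of `g(l)` is a nonzero proper
`Z`-stable subspace `V` of `L³`, hence either `V` or the annihilator of `V` is a line.
* If `l × Z l = 0`, then `Z l = x l` and `Z³ = a` gives `N(x) = a`.
* If `n = l × Z l ≠ 0`, then `n` spans the annihilator of `V`. The cross product turns `Z` into the
  semilinear map `W n = (ρ n₂, a ρ n₀, a ρ n₁)` with `W³ = a²`, and `W n = Z l × Z² l = p n`.
  So `N(p) = a²` and `N(a / p) = a`.

Thus if `a` is not a norm, every nonzero `l` has `det g(l) ≠ 0`, and the inverse lies in `D` because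
the adjugate of `g(l)` is again of the form `g(m)` (`gmat_inverse`).
-/

section Proof

variable {L : Type*} [Field L]

theorem det_gmat (r : L →+* L) (a l0 l1 l2 : L) :
    (gmat r a l0 l1 l2).det =
      l0 * (r l0 * r (r l0) - r l1 * (a * r (r l2)))
      - l1 * (a * r l2 * r (r l0) - r l1 * (a * r (r l1)))
      + l2 * (a * r l2 * (a * r (r l2)) - r l0 * (a * r (r l1))) := by
  rw [Matrix.det_fin_three]
  simp [gmat]
  ring

/-- If `det g(l) ≠ 0`, then `g(l)` is invertible within `D`: the coefficients of the inverse are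
the first row of the adjugate divided by the determinant, which is fixed by `r`. -/
theorem gmat_inverse (r : L →+* L) (hr : ∀ x, r (r (r x)) = x) (a : L) (ha : r a = a)
    (l0 l1 l2 : L) (hd : (gmat r a l0 l1 l2).det ≠ 0) :
    ∃ m0 m1 m2 : L, gmat r a l0 l1 l2 * gmat r a m0 m1 m2 = 1 ∧
      gmat r a m0 m1 m2 * gmat r a l0 l1 l2 = 1 := by
  obtain ⟨d, hdd⟩ : ∃ d, d = (gmat r a l0 l1 l2).det := ⟨_, rfl⟩
  rw [← hdd] at hd
  rw [det_gmat] at hdd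
  have hrd : r d = d := by
    rw [hdd]
    simp only [map_add, map_sub, map_mul, hr, ha]
    ring
  refine ⟨(r l0 * r (r l0) - a * r l1 * r (r l2)) / d, (a * l2 * r (r l2) - l1 * r (r l0)) / d,
    (l1 * r l1 - l2 * r l0) / d, ?_⟩
  have key : gmat r a l0 l1 l2 * gmat r a ((r l0 * r (r l0) - a * r l1 * r (r l2)) / d)
      ((a * l2 * r (r l2) - l1 * r (r l0)) / d) ((l1 * r l1 - l2 * r l0) / d) = 1 := by
    ext i j
    fin_cases i <;> fin_cases j <;>
      simp [gmat, Matrix.mul_apply, Fin.sum_univ_three, hr, ha, hrd] <;>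
      field_simp <;> (try rw [hdd]) <;> ring
  exact ⟨key, mul_eq_one_comm.mp key⟩

/-- Two vectors of `L³` with zero cross product, the first nonzero, are proportional. -/
theorem exists_smul_of_cross_eq_zero (u0 u1 u2 v0 v1 v2 : L) (hu : ¬(u0 = 0 ∧ u1 = 0 ∧ u2 = 0))
    (h0 : u1 * v2 - u2 * v1 = 0) (h1 : u2 * v0 - u0 * v2 = 0) (h2 : u0 * v1 - u1 * v0 = 0) :
    ∃ p, v0 = p * u0 ∧ v1 = p * u1 ∧ v2 = p * u2 := by
  by_cases k0 : u0 = 0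
  · by_cases k1 : u1 = 0
    · have k2 : u2 ≠ 0 := fun k2 => hu ⟨k0, k1, k2⟩
      refine ⟨v2 / u2, ?_, ?_, ?_⟩ <;> field_simp
      · linear_combination h1
      · linear_combination -h0
    · refine ⟨v1 / u1, ?_, ?_, ?_⟩ <;> field_simp
      · linear_combination -h2
      · linear_combination h0
  · refine ⟨v0 / u0, ?_, ?_, ?_⟩ <;> field_simp
    · linear_combination h2
    · linear_combination -h1

/-- An eigenvector of the semilinear map `w ↦ (a ρ w₂, ρ w₀, ρ w₁)` exhibits `a` as the norm of its
eigenvalue. -/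
theorem norm_eq_of_eigenvector (r : L →+* L) (hr : ∀ x, r (r (r x)) = x) (a : L) (ha : r a = a)
    (x l0 l1 l2 : L) (hl : ¬(l0 = 0 ∧ l1 = 0 ∧ l2 = 0))
    (h0 : a * r l2 = x * l0) (h1 : r l0 = x * l1) (h2 : r l1 = x * l2) :
    NormLE r x = a := by
  have g0 := congrArg r h0
  have g1 := congrArg r h1
  have g2 := congrArg r h2
  have f0 := congrArg r g0
  have f1 := congrArg r g1
  have f2 := congrArg r g2
  simp only [map_mul, hr, ha] at g0 g1 g2 f0 f1 f2
  unfold NormLE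
  by_cases k0 : l0 = 0
  · by_cases k1 : l1 = 0
    · have k2 : l2 ≠ 0 := fun k2 => hl ⟨k0, k1, k2⟩
      apply mul_right_cancel₀ k2
      linear_combination -f0 - r (r x) * g1 - r (r x) * r x * h2
    · apply mul_right_cancel₀ k1
      linear_combination -a * f2 - r (r x) * g0 - r (r x) * r x * h1
  · apply mul_right_cancel₀ k0
    linear_combination -a * f1 - a * r (r x) * g2 - r (r x) * r x * h0

/-- An eigenvector of the semilinear map `n ↦ (ρ n₂, a ρ n₀, a ρ n₁)` has an eigenvalue of
norm `a²`. -/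
theorem norm_eq_sq_of_eigenvector (r : L →+* L) (hr : ∀ x, r (r (r x)) = x) (a : L) (ha : r a = a)
    (x l0 l1 l2 : L) (hl : ¬(l0 = 0 ∧ l1 = 0 ∧ l2 = 0))
    (h0 : r l2 = x * l0) (h1 : a * r l0 = x * l1) (h2 : a * r l1 = x * l2) :
    NormLE r x = a ^ 2 := by
  have g0 := congrArg r h0
  have g1 := congrArg r h1
  have g2 := congrArg r h2
  have f0 := congrArg r g0
  have f1 := congrArg r g1
  have f2 := congrArg r g2
  simp only [map_mul, hr, ha] at g0 g1 g2 f0 f1 f2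
  unfold NormLE
  by_cases k0 : l0 = 0
  · by_cases k1 : l1 = 0
    · have k2 : l2 ≠ 0 := fun k2 => hl ⟨k0, k1, k2⟩
      apply mul_right_cancel₀ k2
      linear_combination -a ^ 2 * f0 - a * r (r x) * g1 - r (r x) * r x * h2
    · apply mul_right_cancel₀ k1
      linear_combination -a * f2 - a * r (r x) * g0 - r (r x) * r x * h1
  · apply mul_right_cancel₀ k0
    linear_combination -a * f1 - r (r x) * g2 - r (r x) * r x * h0

/-- A nonzero singular `g(l)` forces `a` to be a norm. -/
theorem exists_norm_of_det_eq_zero (r : L →+* L) (hr : ∀ x, r (r (r x)) = x) (a : L) (ha0 : a ≠ 0)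
    (ha : r a = a) (l0 l1 l2 : L) (hl : ¬(l0 = 0 ∧ l1 = 0 ∧ l2 = 0))
    (hd : (gmat r a l0 l1 l2).det = 0) : ∃ x, NormLE r x = a := by
  rw [det_gmat] at hd
  by_cases hn : l1 * r l1 - l2 * r l0 = 0 ∧ l2 * (a * r l2) - l0 * r l1 = 0 ∧
      l0 * r l0 - l1 * (a * r l2) = 0
  · obtain ⟨x, h0, h1, h2⟩ := exists_smul_of_cross_eq_zero l0 l1 l2 (a * r l2) (r l0) (r l1) hl
      hn.1 hn.2.1 hn.2.2
    exact ⟨x, norm_eq_of_eigenvector r hr a ha x l0 l1 l2 hl h0 h1 h2⟩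
  · -- The identity `n × (Z l × Z² l) = det g(l) • Z l`, for `n = l × Z l`, makes `W n`
    -- proportional to `n`.
    obtain ⟨p, h0, h1, h2⟩ := exists_smul_of_cross_eq_zero _ _ _
      (r (l0 * r l0 - l1 * (a * r l2))) (a * r (l1 * r l1 - l2 * r l0))
      (a * r (l2 * (a * r l2) - l0 * r l1)) hn
      (by simp only [map_sub, map_mul, ha]; linear_combination a * r l2 * hd)
      (by simp only [map_sub, map_mul, ha]; linear_combination r l0 * hd)
      (by simp only [map_sub, map_mul, ha]; linear_combination r l1 * hd)
    have hp := norm_eq_sq_of_eigenvector r hr a ha p _ _ _ hn h0 h1 h2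
    refine ⟨a / p, ?_⟩
    unfold NormLE at hp ⊢
    have hne : p * r p * r (r p) ≠ 0 := by rw [hp]; exact pow_ne_zero 2 ha0
    simp only [map_div₀, ha]
    rw [div_mul_div_comm, div_mul_div_comm, hp]
    field_simp

end Proof

theorem stmt_0
    {F L : Type*} [Field F] [NumberField F] [Field L] [NumberField L]
    [Algebra F L] [IsGalois F L] [FiniteDimensional F L]
    (σ : L ≃ₐ[F] L) (hgen : ∀ g : L ≃ₐ[F] L, g ∈ Subgroup.zpowers σ)
    (hord : orderOf σ = 6)
    (ρ τ : L → L) (hρ : ∀ x, ρ x = (σ ^ 2) x) (hτ : ∀ x, τ x = (σ ^ 3) x)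
    (a b : L) (ha : a ≠ 0) (hb : b ≠ 0)
    (haE : ρ a = a) (hbM : τ b = b)
    (hab : a * τ a = b * ρ b * ρ (ρ b))
    :
    (∀ l0 l1 l2 : L, ¬(l0 = 0 ∧ l1 = 0 ∧ l2 = 0) →
      ∃ m0 m1 m2 : L,
        gmat ρ a l0 l1 l2 * gmat ρ a m0 m1 m2 = 1 ∧
        gmat ρ a m0 m1 m2 * gmat ρ a l0 l1 l2 = 1) ↔
      ¬∃ x : L, NormLE ρ x = a := by
  obtain ⟨r, hr⟩ : ∃ r : L →+* L, ρ = r :=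
    ⟨((σ ^ 2 : L ≃ₐ[F] L) : L →+* L), funext fun x => by simp [hρ]⟩
  have hr3 : ∀ x, r (r (r x)) = x := by
    intro x
    have h6 : σ ^ 6 = 1 := hord ▸ pow_orderOf_eq_one σ
    rw [← hr, hρ, hρ, hρ, ← AlgEquiv.mul_apply, ← AlgEquiv.mul_apply, ← pow_add, ← pow_add, h6,
      AlgEquiv.one_apply]
  subst hr
  constructor
  · rintro h ⟨x, hx⟩
    obtain ⟨m0, m1, m2, hm, -⟩ := h (-x) 1 0 (by simp)
    have hdet := congrArg Matrix.det hm
    rw [Matrix.det_mul, det_gmat, Matrix.det_one] at hdet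
    unfold NormLE at hx
    simp only [map_neg, map_one, map_zero] at hdet
    have h01 : (0 : L) = 1 := by
      rw [← hdet, ← hx]
      ring
    exact zero_ne_one h01
  · intro h l0 l1 l2 hl
    exact gmat_inverse r hr3 a haE l0 l1 l2
      fun hd => h (exists_norm_of_det_eq_zero r hr3 a ha haE l0 l1 l2 hl hd)
end
end

section
/- The map α : D → D defined by α(g(l0,l1,l2)) := g(τ(l0), a⁻¹·b·ρ²(b)·ρ(τ(l2)), a⁻¹·b·ρ²(τ(l1))) is an involution of the second kind on D: α is additive, α(g·h) = α(h)·α(g) for all g, h ∈ D, α(α(g)) = g for all g ∈ D, and α(e·I) = τ(e)·I for every e ∈ E (where e·I = g(e,0,0) is the scalar matrix). -/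
/-!
Write `z = g(0,1,0)`, so that `D = L ⊕ Lz ⊕ Lz²` with `z l = ρ(l) z` and `z³ = a`. The family
`g(l0,l1,l2)` is closed under multiplication, with the usual cyclic-algebra formula for the
coefficients (`gmat_mul_gmat`); this needs only `ρ³ = 1` and `ρ a = a`. The map `α` is the
`τ`-semilinear anti-automorphism with `α(z) = a⁻¹ b z²`, hence `α(z²) = a⁻¹ b ρ²(b) z`, and
`a τ(a) = b ρ(b) ρ²(b)` is what makes `α` respect `z³ = a` and square to the identity. All the
claims thus become identities between coefficients, which follow from `ρ³ = τ² = 1`, `ρτ = τρ`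
and `τ(a) = a⁻¹ b ρ(b) ρ²(b)`.
-/

open Matrix NumberField IsDedekindDomain

noncomputable section

/-- Multiplication of the matrices `g` in terms of coefficients: the multiplication rule of the
cyclic algebra with `z³ = a` and `z l = ρ(l) z`. -/
lemma gmat_mul_gmat {L : Type*} [Field L] (ρ : L →+* L) {a : L} (haE : ρ a = a)
    (h3 : ∀ x, ρ (ρ (ρ x)) = x) (l0 l1 l2 m0 m1 m2 : L) :
    gmat ρ a l0 l1 l2 * gmat ρ a m0 m1 m2 =
      gmat ρ a (l0 * m0 + a * l1 * ρ m2 + a * l2 * ρ (ρ m1))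
        (l0 * m1 + l1 * ρ m0 + a * l2 * ρ (ρ m2))
        (l0 * m2 + l1 * ρ m1 + l2 * ρ (ρ m0)) := by
  ext i j
  fin_cases i <;> fin_cases j <;>
    simp [gmat, Matrix.mul_apply, Fin.sum_univ_three, haE, h3] <;> ring

/-- The four properties of `α` for an arbitrary pair of commuting ring endomorphisms with
`ρ³ = 1` and `τ² = 1`. -/
lemma alphaMat_involution {L : Type*} [Field L] (ρ τ : L →+* L)
    (h3 : ∀ x, ρ (ρ (ρ x)) = x) (h2 : ∀ x, τ (τ x) = x) (hc : ∀ x, τ (ρ x) = ρ (τ x))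
    (a b : L) (ha : a ≠ 0) (hb : b ≠ 0) (haE : ρ a = a) (hbM : τ b = b)
    (hab : a * τ a = b * ρ b * ρ (ρ b)) :
    (∀ l0 l1 l2 m0 m1 m2 : L,
      alphaMat ρ τ a b (l0 + m0) (l1 + m1) (l2 + m2) =
        alphaMat ρ τ a b l0 l1 l2 + alphaMat ρ τ a b m0 m1 m2) ∧
    (∀ l0 l1 l2 m0 m1 m2 n0 n1 n2 : L,
      gmat ρ a l0 l1 l2 * gmat ρ a m0 m1 m2 = gmat ρ a n0 n1 n2 →
      alphaMat ρ τ a b n0 n1 n2 =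
        alphaMat ρ τ a b m0 m1 m2 * alphaMat ρ τ a b l0 l1 l2) ∧
    (∀ l0 l1 l2 : L,
      alphaMat ρ τ a b (τ l0) (a⁻¹ * b * ρ (ρ b) * ρ (τ l2)) (a⁻¹ * b * ρ (ρ (τ l1))) =
        gmat ρ a l0 l1 l2) ∧
    (∀ e : L, ρ e = e → alphaMat ρ τ a b e 0 0 = gmat ρ a (τ e) 0 0) := by
  have hτa : τ a = a⁻¹ * (b * ρ b * ρ (ρ b)) := by rw [← hab]; field_simp
  have hb1 : ρ b ≠ 0 := by simpa using hb
  have hb2 : ρ (ρ b) ≠ 0 := by simpa using hb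
  refine ⟨?_, ?_, ?_, ?_⟩
  · intro l0 l1 l2 m0 m1 m2
    ext i j
    fin_cases i <;> fin_cases j <;> simp [alphaMat, gmat] <;> ring
  · intro l0 l1 l2 m0 m1 m2 n0 n1 n2 h
    rw [gmat_mul_gmat ρ haE h3] at h
    -- The coefficients of `g(n0,n1,n2)` are the entries of its first row.
    have e0 := congrFun (congrFun h 0) 0
    have e1 := congrFun (congrFun h 0) 1
    have e2 := congrFun (congrFun h 0) 2
    simp only [gmat, Matrix.of_apply, Matrix.cons_val] at e0 e1 e2
    subst e0 e1 e2
    unfold alphaMat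
    rw [gmat_mul_gmat ρ haE h3]
    congr 1 <;>
    · simp only [map_add, map_mul, map_inv₀, haE, h3, hc, hτa]
      field_simp <;> ring
  · intro l0 l1 l2
    unfold alphaMat
    congr 1 <;> simp only [map_mul, map_inv₀, haE, h3, h2, hc, hbM, hτa] <;> field_simp
  · intro e _
    simp [alphaMat]

theorem stmt_1
    {F L : Type*} [Field F] [NumberField F] [Field L] [NumberField L]
    [Algebra F L] [IsGalois F L] [FiniteDimensional F L]
    (σ : L ≃ₐ[F] L) (hgen : ∀ g : L ≃ₐ[F] L, g ∈ Subgroup.zpowers σ)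
    (hord : orderOf σ = 6)
    (ρ τ : L → L) (hρ : ∀ x, ρ x = (σ ^ 2) x) (hτ : ∀ x, τ x = (σ ^ 3) x)
    (a b : L) (ha : a ≠ 0) (hb : b ≠ 0)
    (haE : ρ a = a) (hbM : τ b = b)
    (hab : a * τ a = b * ρ b * ρ (ρ b))
    :
    (∀ l0 l1 l2 m0 m1 m2 : L,
      alphaMat ρ τ a b (l0 + m0) (l1 + m1) (l2 + m2) =
        alphaMat ρ τ a b l0 l1 l2 + alphaMat ρ τ a b m0 m1 m2) ∧
    (∀ l0 l1 l2 m0 m1 m2 n0 n1 n2 : L,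
      gmat ρ a l0 l1 l2 * gmat ρ a m0 m1 m2 = gmat ρ a n0 n1 n2 →
      alphaMat ρ τ a b n0 n1 n2 =
        alphaMat ρ τ a b m0 m1 m2 * alphaMat ρ τ a b l0 l1 l2) ∧
    (∀ l0 l1 l2 : L,
      alphaMat ρ τ a b (τ l0) (a⁻¹ * b * ρ (ρ b) * ρ (τ l2)) (a⁻¹ * b * ρ (ρ (τ l1))) =
        gmat ρ a l0 l1 l2) ∧
    (∀ e : L, ρ e = e → alphaMat ρ τ a b e 0 0 = gmat ρ a (τ e) 0 0) := by
  have h6 : σ ^ 6 = 1 := hord ▸ pow_orderOf_eq_one σ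
  obtain rfl : ρ = ((σ ^ 2 : L ≃ₐ[F] L) : L →+* L) := funext hρ
  obtain rfl : τ = ((σ ^ 3 : L ≃ₐ[F] L) : L →+* L) := funext hτ
  have hmul : ∀ (f g : L ≃ₐ[F] L) (x : L), f (g x) = (f * g) x := fun _ _ _ => rfl
  refine alphaMat_involution _ _ (fun x => ?_) (fun x => ?_) (fun x => ?_)
    a b ha hb haE hbM hab
  · change (σ ^ 2) ((σ ^ 2) ((σ ^ 2) x)) = x
    rw [hmul, hmul, ← pow_add, ← pow_add, h6, AlgEquiv.one_apply]
  · change (σ ^ 3) ((σ ^ 3) x) = x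
    rw [hmul, ← pow_add, h6, AlgEquiv.one_apply]
  · change (σ ^ 3) ((σ ^ 2) x) = (σ ^ 2) ((σ ^ 3) x)
    rw [hmul, hmul, ← pow_add, ← pow_add]
end
end

section
/- Assume M is totally real (every ring embedding M → ℂ has image contained in ℝ) and E is totally imaginary (E admits no ring embedding into ℝ). Then the following are equivalent: (i) b is totally positive, i.e. σ(b) > 0 for every ring embedding σ : M → ℝ; (ii) for every ring embedding φ : L → ℂ, the set {g ∈ M₃(ℂ) | gᴴ·H_φ·g = H_φ} is a compact subset of the space of 3×3 complex matrices, where H_φ is the diagonal matrix with diagonal entries φ(b), φ(ρ(b)), φ(ρ²(b)) and gᴴ denotes the conjugate transpose of g. -/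
/-! The element `b` and its conjugates `ρ b`, `ρ² b` lie in `M`, so they have real images under every
`φ : L →+* ℂ`; the group in question is the unitary group of the real diagonal form with these entries.

If `b` is totally positive, the form is positive definite for every `φ` (apply the hypothesis to
`φ`, `φ ∘ ρ`, `φ ∘ ρ²`), and the diagonal entries of `gᴴ H g = H` bound the entries of `g`
(`isCompact_of_pos`).

Conversely, a compact unitary group forces the form to be definite, because a plane of signature
`(1,1)` carries arbitrarily large hyperbolic rotations (`not_isCompact_of_neg_pos`). The hypothesis
`a · τ a = N(b)` excludes negative definiteness: since `M` is totally real and `E` totally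
imaginary, `φ ∘ τ` is the complex conjugate of `φ` (`map_tau_eq_conj`), hence `φ (N b) = |φ a|² > 0`. -/

open Matrix NumberField IsDedekindDomain

noncomputable section

/-- The unitary group of a positive definite diagonal form is compact. -/
lemma isCompact_of_pos (d : Fin 3 → ℝ) (hd : ∀ i, 0 < d i) :
    IsCompact {g : Matrix (Fin 3) (Fin 3) ℂ |
      gᴴ * Matrix.diagonal (fun i => (d i : ℂ)) * g = Matrix.diagonal (fun i => (d i : ℂ))} := by
  -- The entries satisfy `d i * ‖g i j‖² ≤ d j`, so the group lies in a product of closed discs.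
  have hK : IsCompact (Set.univ.pi fun i : Fin 3 => Set.univ.pi fun j : Fin 3 =>
      Metric.closedBall (0 : ℂ) (√(d j / d i))) :=
    isCompact_univ_pi fun i => isCompact_univ_pi fun j => isCompact_closedBall _ _
  refine IsCompact.of_isClosed_subset hK ?_ ?_
  · exact isClosed_eq (by fun_prop) continuous_const
  · intro g hg i _ j _
    have h := congrArg Complex.re (congrFun (congrFun hg j) j)
    have h' : ∑ k, d k * ‖g k j‖ ^ 2 = d j := by
      rw [Matrix.mul_apply] at h
      simp only [Matrix.mul_diagonal, Matrix.conjTranspose_apply, Matrix.diagonal_apply_eq,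
        Complex.re_sum, Complex.ofReal_re] at h
      rw [← h]
      refine Finset.sum_congr rfl fun k _ => ?_
      rw [Complex.sq_norm, Complex.normSq_apply]
      simp
      ring
    have h2 : d i * ‖g i j‖ ^ 2 ≤ d j := by
      rw [← h']
      exact Finset.single_le_sum (f := fun k => d k * ‖g k j‖ ^ 2)
        (fun k _ => mul_nonneg (hd k).le (sq_nonneg _)) (Finset.mem_univ i)
    rw [mem_closedBall_zero_iff]
    apply Real.le_sqrt_of_sq_le
    rw [le_div_iff₀ (hd i)]
    linarith

/-- The unitary group of a diagonal form that is negative on the first basis vector and positive on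
another one is unbounded. -/
lemma not_isCompact_of_neg_pos (d : Fin 3 → ℝ) (h0 : d 0 < 0) (h12 : 0 < d 1 ∨ 0 < d 2) :
    ¬ IsCompact {g : Matrix (Fin 3) (Fin 3) ℂ |
      gᴴ * Matrix.diagonal (fun i => (d i : ℂ)) * g = Matrix.diagonal (fun i => (d i : ℂ))} := by
  intro hc
  have hf : Continuous fun g : Matrix (Fin 3) (Fin 3) ℂ => (g 0 0).re := by fun_prop
  obtain ⟨B, hB⟩ := (hc.image hf).bddAbove
  obtain ⟨s, hs⟩ : ∃ s : ℝ, s = |B| + 1 := ⟨_, rfl⟩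
  -- `c` and `s` play the roles of the hyperbolic cosine and sine of a large parameter.
  obtain ⟨c, hc0, hcs⟩ : ∃ c : ℝ, 0 ≤ c ∧ c ^ 2 = 1 + s ^ 2 :=
    ⟨√(1 + s ^ 2), Real.sqrt_nonneg _, Real.sq_sqrt (by positivity)⟩
  have hcB : B < c := by
    have := le_abs_self B
    have := abs_nonneg B
    nlinarith
  have key : ∀ p : ℝ, 0 < p → ∃ k l : ℝ, k * l = 1 ∧ d 0 * k ^ 2 + p = 0 := by
    intro p hp
    have hk : 0 < p / -d 0 := div_pos hp (by linarith)
    refine ⟨√(p / -d 0), (√(p / -d 0))⁻¹, mul_inv_cancel₀ (Real.sqrt_pos.2 hk).ne', ?_⟩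
    have hne : d 0 ≠ 0 := h0.ne
    rw [Real.sq_sqrt hk.le]
    field_simp
    ring
  have hcs' : (c : ℂ) ^ 2 = 1 + (s : ℂ) ^ 2 := by exact_mod_cast hcs
  refine absurd hcB (not_lt.2 ?_)
  rcases h12 with hp | hp
  · obtain ⟨k, l, hkl, hk⟩ := key _ hp
    have hkl' : (k : ℂ) * l = 1 := by exact_mod_cast hkl
    have hk' : (d 0 : ℂ) * k ^ 2 + d 1 = 0 := by exact_mod_cast hk
    refine hB ⟨!![(c : ℂ), s * k, 0; s * l, c, 0; 0, 0, 1], ?_, by simp⟩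
    ext i j
    fin_cases i <;> fin_cases j <;>
      simp [Matrix.mul_apply, Fin.sum_univ_three, Matrix.diagonal] <;> grind
  · obtain ⟨k, l, hkl, hk⟩ := key _ hp
    have hkl' : (k : ℂ) * l = 1 := by exact_mod_cast hkl
    have hk' : (d 0 : ℂ) * k ^ 2 + d 2 = 0 := by exact_mod_cast hk
    refine hB ⟨!![(c : ℂ), 0, s * k; 0, 1, 0; s * l, 0, c], ?_, by simp⟩
    ext i j
    fin_cases i <;> fin_cases j <;>
      simp [Matrix.mul_apply, Fin.sum_univ_three, Matrix.diagonal] <;> grind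

/-- If the fixed field of an involution `t` is real under `φ` and some `y` has a nonreal image, then
`φ ∘ t` is the complex conjugate of `φ`: the element `y - t y` is anti-invariant with a nonzero
purely imaginary image, so every anti-invariant element has a purely imaginary image. -/
lemma map_tau_eq_conj {L : Type*} [Field L] (t : L →+* L) (ht : ∀ x, t (t x) = x) (φ : L →+* ℂ)
    (hreal : ∀ y, t y = y → (φ y).im = 0) (y : L) (hy : (φ y).im ≠ 0) (x : L) :
    φ (t x) = star (φ x) := by
  have sum_im : ∀ z, (φ z).im + (φ (t z)).im = 0 := fun z => by
    simpa using hreal (z + t z) (by rw [map_add, ht, add_comm])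
  have hmul : ∀ z, ((φ y - φ (t y)) * (φ z - φ (t z))).im = 0 := fun z => by
    simpa using hreal ((y - t y) * (z - t z)) (by simp only [map_mul, map_sub, ht]; ring)
  have hyy := hmul y
  have hyx := hmul x
  have s1 := sum_im y
  have s2 := sum_im x
  simp only [Complex.mul_im, Complex.sub_re, Complex.sub_im] at hyy hyx
  have hY : (φ y).im - (φ (t y)).im ≠ 0 := fun h => hy (by linarith)
  have hre : (φ y).re - (φ (t y)).re = 0 := by
    apply (mul_eq_zero.1 (_ : _ * ((φ y).im - (φ (t y)).im) = 0)).resolve_right hY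
    linarith
  rw [hre, zero_mul, zero_add] at hyx
  have hx := (mul_eq_zero.1 hyx).resolve_left hY
  apply Complex.ext
  · simp; linarith
  · simp; linarith

theorem stmt_3
    {F L : Type*} [Field F] [NumberField F] [Field L] [NumberField L]
    [Algebra F L] [IsGalois F L] [FiniteDimensional F L]
    (σ : L ≃ₐ[F] L) (hgen : ∀ g : L ≃ₐ[F] L, g ∈ Subgroup.zpowers σ)
    (hord : orderOf σ = 6)
    (ρ τ : L → L) (hρ : ∀ x, ρ x = (σ ^ 2) x) (hτ : ∀ x, τ x = (σ ^ 3) x)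
    (a b : L) (ha : a ≠ 0) (hb : b ≠ 0)
    (haE : ρ a = a) (hbM : τ b = b)
    (hab : a * τ a = b * ρ b * ρ (ρ b))
    (hMreal : ∀ (φ : L →+* ℂ) (y : L), τ y = y → (φ y).im = 0)
    (hEimag : ∀ φ : L →+* ℂ, ∃ y : L, ρ y = y ∧ (φ y).im ≠ 0) :
    (∀ φ : L →+* ℂ, 0 < (φ b).re) ↔
      (∀ φ : L →+* ℂ, IsCompact {g : Matrix (Fin 3) (Fin 3) ℂ |
        gᴴ * Matrix.diagonal ![φ b, φ (ρ b), φ (ρ (ρ b))] * g =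
          Matrix.diagonal ![φ b, φ (ρ b), φ (ρ (ρ b))]}) := by
  have h6 : σ ^ 6 = 1 := hord ▸ pow_orderOf_eq_one σ
  have hττ : ∀ x, (σ ^ 3) ((σ ^ 3) x) = x := fun x => by
    rw [← AlgEquiv.mul_apply, ← pow_add, h6, AlgEquiv.one_apply]
  have hcomm : ∀ x, τ (ρ x) = ρ (τ x) := fun x => by
    simp only [hτ, hρ]
    rw [← AlgEquiv.mul_apply, ← AlgEquiv.mul_apply, ← pow_add, ← pow_add]
  have hρb : τ (ρ b) = ρ b := by rw [hcomm, hbM]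
  have hρρb : τ (ρ (ρ b)) = ρ (ρ b) := by rw [hcomm, hρb]
  -- The form has real coefficients.
  have hdiag : ∀ φ : L →+* ℂ, ![φ b, φ (ρ b), φ (ρ (ρ b))] =
      fun i => ((![(φ b).re, (φ (ρ b)).re, (φ (ρ (ρ b))).re] i : ℝ) : ℂ) := by
    intro φ
    ext i
    fin_cases i
    · exact Complex.ext rfl (by simpa using hMreal φ b hbM)
    · exact Complex.ext rfl (by simpa using hMreal φ _ hρb)
    · exact Complex.ext rfl (by simpa using hMreal φ _ hρρb)
  constructor
  · intro h φ
    rw [hdiag φ]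
    apply isCompact_of_pos
    have h1 := h (φ.comp ((σ ^ 2 : L ≃ₐ[F] L) : L →+* L))
    have h2 := h (φ.comp (((σ ^ 2 : L ≃ₐ[F] L) : L →+* L).comp ((σ ^ 2 : L ≃ₐ[F] L) : L →+* L)))
    intro i
    fin_cases i
    · exact h φ
    · simpa [hρ] using h1
    · simpa [hρ] using h2
  · intro h φ
    have hc := h φ
    rw [hdiag φ] at hc
    obtain ⟨y, -, hy⟩ := hEimag φ
    have hconj : φ (τ a) = star (φ a) := by
      rw [hτ]
      exact map_tau_eq_conj ((σ ^ 3 : L ≃ₐ[F] L) : L →+* L) hττ φ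
        (fun z hz => hMreal φ z ((hτ z).trans hz)) y hy a
    have hprod : 0 < (φ b).re * (φ (ρ b)).re * (φ (ρ (ρ b))).re := by
      have e := congrArg (fun z => (φ z).re) hab
      simp only [map_mul, hconj, Complex.mul_re, Complex.mul_im, hMreal φ b hbM,
        hMreal φ _ hρb, hMreal φ _ hρρb] at e
      have hpos : 0 < Complex.normSq (φ a) := Complex.normSq_pos.2 ((map_ne_zero φ).2 ha)
      rw [Complex.normSq_apply] at hpos
      simp at e
      linarith
    by_contra hneg
    have h0 : (φ b).re < 0 := lt_of_le_of_ne (not_lt.1 hneg) fun h0 => by simp [h0] at hprod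
    -- The norm is positive, so one of the two other coefficients is positive.
    refine not_isCompact_of_neg_pos _ h0 ?_ hc
    by_contra! hle
    have h1 : (φ (ρ b)).re ≤ 0 := hle.1
    have h2 : (φ (ρ (ρ b))).re ≤ 0 := hle.2
    have := mul_nonneg_of_nonpos_of_nonpos h1 h2
    nlinarith
end
end

section
/- (a) If g(l0,l1,l2) is unitary and one of l0, l1, l2 is zero, then at least two of l0, l1, l2 are zero; in particular g is monomial, i.e. of the form g(l,0,0), g(0,l,0) or g(0,0,l). (b) For l ∈ L: g(l,0,0) is unitary if and only if l·τ(l) = 1; g(0,l,0) is unitary if and only if ρ(b)·l·τ(l) = 1; and g(0,0,l) is unitary if and only if ρ(b)·ρ²(b)·l·τ(l) = 1. -/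
open Matrix NumberField IsDedekindDomain

noncomputable section

/-!
Each of the three summands of (U2) is a nonzero scalar times a product of conjugates of two of the
coefficients, and each pair of coefficients occurs once. If one coefficient vanishes, the two
summands containing it drop out, and the remaining one, which must be zero, makes a second
coefficient vanish. When two coefficients are zero, (U2) holds trivially and (U1) has a single
summand left, which gives the monomial case.
-/

theorem stmt_4
    {F L : Type*} [Field F] [NumberField F] [Field L] [NumberField L]
    [Algebra F L] [IsGalois F L] [FiniteDimensional F L]
    (σ : L ≃ₐ[F] L) (hgen : ∀ g : L ≃ₐ[F] L, g ∈ Subgroup.zpowers σ)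
    (hord : orderOf σ = 6)
    (ρ τ : L → L) (hρ : ∀ x, ρ x = (σ ^ 2) x) (hτ : ∀ x, τ x = (σ ^ 3) x)
    (a b : L) (ha : a ≠ 0) (hb : b ≠ 0)
    (haE : ρ a = a) (hbM : τ b = b)
    (hab : a * τ a = b * ρ b * ρ (ρ b))
    :
    (∀ l0 l1 l2 : L, IsUnitaryCoeffs ρ τ a b l0 l1 l2 →
      (l0 = 0 ∨ l1 = 0 ∨ l2 = 0) →
      ((l0 = 0 ∧ l1 = 0) ∨ (l0 = 0 ∧ l2 = 0) ∨ (l1 = 0 ∧ l2 = 0))) ∧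
    (∀ l : L,
      (IsUnitaryCoeffs ρ τ a b l 0 0 ↔ l * τ l = 1) ∧
      (IsUnitaryCoeffs ρ τ a b 0 l 0 ↔ ρ b * (l * τ l) = 1) ∧
      (IsUnitaryCoeffs ρ τ a b 0 0 l ↔ ρ b * ρ (ρ b) * (l * τ l) = 1)) := by
  have hρ0 : ∀ x, ρ x = 0 ↔ x = 0 := fun x => by
    rw [hρ]; exact map_eq_zero_iff _ (σ ^ 2).injective
  have hτ0 : ∀ x, τ x = 0 ↔ x = 0 := fun x => by
    rw [hτ]; exact map_eq_zero_iff _ (σ ^ 3).injective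
  have hρz : ρ 0 = 0 := (hρ0 0).2 rfl
  have hτz : τ 0 = 0 := (hτ0 0).2 rfl
  refine ⟨?_, fun l => ⟨?_, ?_, ?_⟩⟩
  · rintro l0 l1 l2 ⟨-, h⟩ (rfl | rfl | rfl) <;>
      simp [hρz, hτz, hρ0, hτ0, ha, hb] at h <;> tauto
  all_goals simp [IsUnitaryCoeffs, hρz, hτz]
end
end

section
/- Assume a is not a norm from L. If l ∈ L is nonzero and one of the monomial matrices g(l,0,0), g(0,l,0), g(0,0,l) is special unitary, then it is g(l,0,0) and l satisfies the two norm equations l·τ(l) = 1 and N_{L/E}(l) = 1; conversely, for every l ∈ L with l·τ(l) = 1 and N_{L/E}(l) = 1 the matrix g(l,0,0) is special unitary. Moreover, if in addition l ∈ E, then l³ = 1. -/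
/-! On a monomial matrix all cross terms in (Det) vanish, so the determinant condition for
`g(0,l,0)` is `a * N(l) = 1`, i.e. `a = N(l⁻¹)`, and for `g(0,0,l)` it is `a² * N(l) = 1`;
as `a` lies in `E`, `N(a) = a³` and hence `a = N(a * l)`. Either way `a` would be a norm. For
`g(l,0,0)` the conditions reduce to the two norm equations, and `N(l) = l³` on `E`. -/

open Matrix NumberField IsDedekindDomain

noncomputable section

theorem stmt_5
    {F L : Type*} [Field F] [NumberField F] [Field L] [NumberField L]
    [Algebra F L] [IsGalois F L] [FiniteDimensional F L]
    (σ : L ≃ₐ[F] L) (hgen : ∀ g : L ≃ₐ[F] L, g ∈ Subgroup.zpowers σ)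
    (hord : orderOf σ = 6)
    (ρ τ : L → L) (hρ : ∀ x, ρ x = (σ ^ 2) x) (hτ : ∀ x, τ x = (σ ^ 3) x)
    (a b : L) (ha : a ≠ 0) (hb : b ≠ 0)
    (haE : ρ a = a) (hbM : τ b = b)
    (hab : a * τ a = b * ρ b * ρ (ρ b))
    (hnn : ¬∃ x : L, NormLE ρ x = a) :
    (∀ l : L, l ≠ 0 →
      ¬IsSpecialUnitaryCoeffs ρ τ a b 0 l 0 ∧
      ¬IsSpecialUnitaryCoeffs ρ τ a b 0 0 l ∧
      (IsSpecialUnitaryCoeffs ρ τ a b l 0 0 ↔ (l * τ l = 1 ∧ NormLE ρ l = 1))) ∧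
    (∀ l : L, l * τ l = 1 → NormLE ρ l = 1 → ρ l = l → l ^ 3 = 1) := by
  have ρ0 : ρ 0 = 0 := by rw [hρ, map_zero]
  have τ0 : τ 0 = 0 := by rw [hτ, map_zero]
  have ρm : ∀ x y, ρ (x * y) = ρ x * ρ y := fun x y => by simp only [hρ, map_mul]
  have ρi : ∀ x, ρ x⁻¹ = (ρ x)⁻¹ := fun x => by simp only [hρ, map_inv₀]
  refine ⟨fun l _ => ⟨?_, ?_, ?_⟩, ?_⟩
  · rintro ⟨-, h⟩
    have h1 : a * NormLE ρ l = 1 := by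
      simpa [NormLE, TrLE, ρ0] using h
    refine hnn ⟨l⁻¹, ?_⟩
    have h2 : NormLE ρ l⁻¹ = (NormLE ρ l)⁻¹ := by
      simp only [NormLE, ρi, mul_inv]
    rw [h2]
    exact (eq_inv_of_mul_eq_one_left h1).symm
  · rintro ⟨-, h⟩
    have h1 : a ^ 2 * NormLE ρ l = 1 := by
      simpa [NormLE, TrLE, ρ0] using h
    -- `N(a) = a³` since `a ∈ E`, so `N(a * l) = a * (a² * N(l)) = a`.
    refine hnn ⟨a * l, ?_⟩
    simp only [NormLE, ρm, haE] at h1 ⊢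
    linear_combination a * h1
  · simp [IsSpecialUnitaryCoeffs, IsUnitaryCoeffs, NormLE, TrLE, ρ0, τ0]
  · intro l _ h hl
    simp only [NormLE, hl] at h
    linear_combination h
end
end

section
/- Assume a ∉ F and a is not a norm from L. Let ε ∈ {1, −1}. If g(l0,l1,l2) is special unitary and τ(l_j) = ε·l_j for j = 0, 1, 2, then (l0,l1,l2) = (1,0,0), i.e. g is the identity matrix. -/
/-!
Since `a` is fixed by `ρ` but does not lie in `F`, it is moved by `τ`. The sign `ε` cancels in (U2),
and products of two of the elements `lᵢ`, `ρ lⱼ` are `τ`-fixed, as is `b` with its conjugates.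
Subtracting from (U2) its image under `τ` therefore leaves `(a - τ a) · l0 · ρ l2 = 0`, so `l0 = 0`
or `l2 = 0`, and (U2) then forces all but one of `l0, l1, l2` to vanish. If only `l1` survives, (Det)
reads `a · N(l1) = 1`; if only `l2` survives, it reads `a² · N(l2) = 1`, so `a = N(a · l2)`.
Either way `a` would be a norm. If only `l0` survives, then `l0² = ε` by (U1) and `N(l0) = 1` by (Det);
taking norms of the former gives `ε = ε³ = 1`, so `l0 = ±1`, and `N(l0) = 1` selects `l0 = 1`.
-/

open Matrix NumberField IsDedekindDomain

noncomputable section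

/-- An element fixed by `σ²` and `σ³` is fixed by `σ`, hence by the whole Galois group. -/
theorem mem_range_of_fixed_sq_cube {F L : Type*} [Field F] [Field L] [Algebra F L]
    [IsGalois F L] [FiniteDimensional F L]
    (σ : L ≃ₐ[F] L) (hgen : ∀ g : L ≃ₐ[F] L, g ∈ Subgroup.zpowers σ) (a : L)
    (h2 : (σ ^ 2) a = a) (h3 : (σ ^ 3) a = a) : a ∈ Set.range (algebraMap F L) := by
  rw [IsGalois.mem_range_algebraMap_iff_fixed]
  have h1 : σ ∈ MulAction.stabilizer (L ≃ₐ[F] L) a := by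
    rw [pow_succ', AlgEquiv.mul_apply, h2] at h3
    exact h3
  intro g
  exact (Subgroup.zpowers_le.mpr h1) (hgen g)

theorem stmt_6
    {F L : Type*} [Field F] [NumberField F] [Field L] [NumberField L]
    [Algebra F L] [IsGalois F L] [FiniteDimensional F L]
    (σ : L ≃ₐ[F] L) (hgen : ∀ g : L ≃ₐ[F] L, g ∈ Subgroup.zpowers σ)
    (hord : orderOf σ = 6)
    (ρ τ : L → L) (hρ : ∀ x, ρ x = (σ ^ 2) x) (hτ : ∀ x, τ x = (σ ^ 3) x)
    (a b : L) (ha : a ≠ 0) (hb : b ≠ 0)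
    (haE : ρ a = a) (hbM : τ b = b)
    (hab : a * τ a = b * ρ b * ρ (ρ b))
    (haF : a ∉ Set.range (algebraMap F L))
    (hnn : ¬∃ x : L, NormLE ρ x = a) :
    ∀ (ε : L), (ε = 1 ∨ ε = -1) →
      ∀ l0 l1 l2 : L, IsSpecialUnitaryCoeffs ρ τ a b l0 l1 l2 →
        τ l0 = ε * l0 → τ l1 = ε * l1 → τ l2 = ε * l2 →
        l0 = 1 ∧ l1 = 0 ∧ l2 = 0 := by
  rintro ε hε l0 l1 l2 ⟨⟨hU1, hU2⟩, hD⟩ h0 h1 h2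
  have hρm (x y) : ρ (x * y) = ρ x * ρ y := by simp only [hρ, map_mul]
  have hρi (x) : ρ x⁻¹ = (ρ x)⁻¹ := by simp only [hρ, map_inv₀]
  have hρz : ρ 0 = 0 := by simp only [hρ, map_zero]
  have hρinj (x) (h : ρ x = 0) : x = 0 := by simpa [hρ] using h
  have hρε : ρ ε = ε := by rcases hε with rfl | rfl <;> simp [hρ]
  have hτm (x y) : τ (x * y) = τ x * τ y := by simp only [hτ, map_mul]
  have hτa (x y) : τ (x + y) = τ x + τ y := by simp only [hτ, map_add]
  have hτz : τ 0 = 0 := by simp only [hτ, map_zero]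
  have hcomm (x) : τ (ρ x) = ρ (τ x) := by
    simp only [hρ, hτ, ← AlgEquiv.mul_apply, ← pow_add]
  have hεε : ε * ε = 1 := by rcases hε with rfl | rfl <;> ring
  have hε0 : ε ≠ 0 := left_ne_zero_of_mul_eq_one hεε
  have hρb : ρ b ≠ 0 := fun h => hb (hρinj _ h)
  have hρρb : ρ (ρ b) ≠ 0 := fun h => hρb (hρinj _ h)
  have hane : a - τ a ≠ 0 := fun h => haF <|
    mem_range_of_fixed_sq_cube σ hgen a (by rw [← hρ, haE])
      (by rw [← hτ]; exact (sub_eq_zero.mp h).symm)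
  rw [h0, h1, h2] at hU2
  rw [h0, h1, h2] at hU1
  have hU2' : a * (l0 * ρ l2) + ρ b * (l1 * ρ l0) + ρ b * ρ (ρ b) * (l2 * ρ l1) = 0 := by
    apply mul_left_cancel₀ hε0
    linear_combination hU2
  -- `τ` only replaces `a` by `τ a` here, up to factors `ε² = 1`.
  have hτU2 := congrArg τ hU2'
  simp only [hτa, hτm, hτz, hcomm, hbM, h0, h1, h2, hρm, hρε] at hτU2
  have hkey : (a - τ a) * (l0 * ρ l2) = 0 := by
    linear_combination hU2' - hτU2 + (τ a * (l0 * ρ l2) + ρ b * (l1 * ρ l0)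
      + ρ b * ρ (ρ b) * (l2 * ρ l1)) * hεε
  have hprod := (mul_eq_zero.mp hkey).resolve_left hane
  have hl1 (e0 : l0 = 0) (e2 : l2 = 0) : False := by
    subst e0 e2
    simp only [NormLE, TrLE, hρz, mul_zero, zero_mul] at hD
    have hN : a * (l1 * ρ l1 * ρ (ρ l1)) = 1 := by linear_combination hD
    refine hnn ⟨l1⁻¹, ?_⟩
    rw [NormLE, hρi, hρi, ← mul_inv, ← mul_inv]
    exact (eq_inv_of_mul_eq_one_left hN).symm
  have hl2 (e0 : l0 = 0) (e1 : l1 = 0) : False := by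
    subst e0 e1
    simp only [NormLE, TrLE, hρz, mul_zero, zero_mul] at hD
    refine hnn ⟨a * l2, ?_⟩
    simp only [NormLE, hρm, haE]
    linear_combination a * hD
  have hl0 (e1 : l1 = 0) (e2 : l2 = 0) : l0 = 1 := by
    subst e1 e2
    simp only [NormLE, TrLE, hρz, mul_zero, zero_mul] at hD
    have hsq : l0 * l0 = ε := by
      linear_combination ε * hU1 - l0 * l0 * hεε
    have hN : l0 * ρ l0 * ρ (ρ l0) = 1 := by linear_combination hD
    have hsq1 := congrArg ρ hsq
    rw [hρm, hρε] at hsq1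
    have hsq2 := congrArg ρ hsq1
    rw [hρm, hρε] at hsq2
    -- `N(l0²) = N(ε) = ε³ = ε`, while `N(l0)² = 1`.
    have hε1 : ε = 1 := by
      have h3 : (l0 * l0) * (ρ l0 * ρ l0) * (ρ (ρ l0) * ρ (ρ l0)) = 1 := by
        linear_combination (l0 * ρ l0 * ρ (ρ l0) + 1) * hN
      rw [hsq, hsq1, hsq2] at h3
      linear_combination h3 - ε * hεε
    rcases mul_self_eq_one_iff.mp (hsq.trans hε1) with h | h
    · exact h
    · have hρl : ρ l0 = l0 := by rw [h, hρ, map_neg, map_one]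
      rw [hρl, hρl, hsq, hε1, one_mul] at hN
      exact hN
  rcases mul_eq_zero.mp hprod with e0 | e2
  · exfalso
    subst e0
    have h : ρ b * ρ (ρ b) * (l2 * ρ l1) = 0 := by
      rw [hρz] at hU2'
      linear_combination hU2'
    rcases mul_eq_zero.mp ((mul_eq_zero.mp h).resolve_left (mul_ne_zero hρb hρρb)) with e | e
    · exact hl1 rfl e
    · exact hl2 rfl (hρinj _ e)
  · have e2 := hρinj _ e2
    subst e2
    have h : ρ b * (l1 * ρ l0) = 0 := by
      rw [hρz] at hU2'
      linear_combination hU2'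
    rcases mul_eq_zero.mp ((mul_eq_zero.mp h).resolve_left hρb) with e | e
    · exact ⟨hl0 e rfl, e, rfl⟩
    · exact (hl1 (hρinj _ e) rfl).elim
end
end

section
/- Assume a ∉ F. The unitary matrices g(l0,l1,l2) with τ(l_j) = l_j for j = 0, 1, 2 are exactly the following: g(1,0,0) and g(−1,0,0); the matrices g(0,l,0) with l ∈ M satisfying ρ(b)·l² = 1; and the matrices g(0,0,l) with l ∈ M satisfying ρ(b)·ρ²(b)·l² = 1. -/
/-!
For `τ`-fixed coefficients, `τ` fixes every factor of the unitary condition (U2) except `a`, since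
`ρ` and `τ` commute and `b ∈ M`. Subtracting (U2) from its image under `τ` leaves
`(τ a - a) · l0 · ρ(l2) = 0`. As `a ∈ E \ F`, `τ a ≠ a` (`sigma_cubed_ne`), so `l0 = 0` or
`l2 = 0`; then (U2) is a single product, which kills a second coefficient, and (U1) says what the
remaining one is.
-/

open Matrix NumberField IsDedekindDomain

noncomputable section

/-- An element of `L` fixed by both `σ²` and `σ³` is fixed by `σ`, hence lies in `F`. -/
theorem sigma_cubed_ne {F L : Type*} [Field F] [Field L] [Algebra F L] [IsGalois F L]
    [FiniteDimensional F L] (σ : L ≃ₐ[F] L) (hgen : ∀ g : L ≃ₐ[F] L, g ∈ Subgroup.zpowers σ)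
    (a : L) (haE : (σ ^ 2) a = a) (haF : a ∉ Set.range (algebraMap F L)) :
    (σ ^ 3) a ≠ a := by
  intro h
  apply haF
  have h1 : σ a = a := by
    rw [pow_succ', AlgEquiv.mul_apply, haE] at h
    exact h
  rw [IsGalois.mem_range_algebraMap_iff_fixed]
  intro g
  have hle : Subgroup.zpowers σ ≤ MulAction.stabilizer (L ≃ₐ[F] L) a := by
    rw [Subgroup.zpowers_le]
    exact h1
  exact hle (hgen g)

theorem stmt_7
    {F L : Type*} [Field F] [NumberField F] [Field L] [NumberField L]
    [Algebra F L] [IsGalois F L] [FiniteDimensional F L]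
    (σ : L ≃ₐ[F] L) (hgen : ∀ g : L ≃ₐ[F] L, g ∈ Subgroup.zpowers σ)
    (hord : orderOf σ = 6)
    (ρ τ : L → L) (hρ : ∀ x, ρ x = (σ ^ 2) x) (hτ : ∀ x, τ x = (σ ^ 3) x)
    (a b : L) (ha : a ≠ 0) (hb : b ≠ 0)
    (haE : ρ a = a) (hbM : τ b = b)
    (hab : a * τ a = b * ρ b * ρ (ρ b))
    (haF : a ∉ Set.range (algebraMap F L)) :
    ∀ l0 l1 l2 : L,
      (IsUnitaryCoeffs ρ τ a b l0 l1 l2 ∧ τ l0 = l0 ∧ τ l1 = l1 ∧ τ l2 = l2) ↔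
      ((l1 = 0 ∧ l2 = 0 ∧ (l0 = 1 ∨ l0 = -1)) ∨
       (l0 = 0 ∧ l2 = 0 ∧ τ l1 = l1 ∧ ρ b * l1 ^ 2 = 1) ∨
       (l0 = 0 ∧ l1 = 0 ∧ τ l2 = l2 ∧ ρ b * ρ (ρ b) * l2 ^ 2 = 1)) := by
  have hτa : τ a ≠ a := by
    rw [hτ]
    exact sigma_cubed_ne σ hgen a (by rw [← hρ, haE]) haF
  have hcomm : ∀ x, τ (ρ x) = ρ (τ x) := fun x => by
    rw [hτ, hρ, hρ, hτ, ← AlgEquiv.mul_apply, ← AlgEquiv.mul_apply, ← pow_add, ← pow_add]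
  have hτmul : ∀ x y, τ (x * y) = τ x * τ y := fun x y => by simp only [hτ, map_mul]
  have hτadd : ∀ x y, τ (x + y) = τ x + τ y := fun x y => by simp only [hτ, map_add]
  have hτ0 : τ 0 = 0 := by rw [hτ, map_zero]
  have hτ1 : τ 1 = 1 := by rw [hτ, map_one]
  have hτneg : τ (-1) = -1 := by rw [hτ, map_neg, map_one]
  have hρ0 : ρ 0 = 0 := by rw [hρ, map_zero]
  have hρz : ∀ x, ρ x = 0 ↔ x = 0 := fun x => by rw [hρ, map_eq_zero]
  intro l0 l1 l2
  unfold IsUnitaryCoeffs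
  constructor
  · rintro ⟨⟨h1, h2⟩, e0, e1, e2⟩
    rw [e0, e1, e2] at h1 h2
    have h3 := congrArg τ h2
    simp only [hτadd, hτmul, hcomm, e0, e1, e2, hbM, hτ0] at h3
    have h4 : (τ a - a) * (l0 * ρ l2) = 0 := by linear_combination h3 - h2
    have h5 : l0 = 0 ∨ l2 = 0 := by
      simpa [sub_eq_zero, hτa, hρz] using h4
    rcases h5 with rfl | rfl
    · have h6 : l2 = 0 ∨ l1 = 0 := by simpa [hρ0, hρz, hb] using h2
      rcases h6 with rfl | rfl
      · exact Or.inr (Or.inl ⟨rfl, rfl, e1, by linear_combination h1⟩)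
      · exact Or.inr (Or.inr ⟨rfl, rfl, e2, by linear_combination h1⟩)
    · have h6 : l1 = 0 ∨ l0 = 0 := by simpa [hρ0, hρz, hb] using h2
      rcases h6 with rfl | rfl
      · exact Or.inl ⟨rfl, rfl, mul_self_eq_one_iff.mp (by linear_combination h1)⟩
      · exact Or.inr (Or.inl ⟨rfl, rfl, e1, by linear_combination h1⟩)
  · rintro (⟨rfl, rfl, rfl | rfl⟩ | ⟨rfl, rfl, e1, h⟩ | ⟨rfl, rfl, e2, h⟩)
    · simp [hτ0, hτ1, hρ0]
    · simp [hτ0, hτneg, hρ0]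
    · refine ⟨⟨?_, ?_⟩, hτ0, e1, hτ0⟩
      · rw [e1]; linear_combination h
      · simp [hτ0, hρ0]
    · refine ⟨⟨?_, ?_⟩, hτ0, hτ0, e2⟩
      · rw [e2]; linear_combination h
      · simp [hτ0, hρ0]
end
end

section
/- Assume a ∉ F, and assume E = F(s) where s ∈ E satisfies s² = −d for some d ∈ F and s ∉ F. The unitary matrices g(l0,l1,l2) with τ(l_j) = −l_j for j = 0, 1, 2 are exactly the following: the matrices g(l,0,0) with l ∈ s·M (i.e. l = s·m for some m ∈ M) satisfying l⁴ = 1; the matrices g(0,s·l,0) with l ∈ M satisfying d·ρ(b)·l² = 1; and the matrices g(0,0,s·l) with l ∈ M satisfying d·ρ(b)·ρ²(b)·l² = 1. -/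
/-!
Since `σ x = σ³ x` whenever `σ² x = x`, an element fixed by both `ρ` and `τ` lies in `F`
(`mem_range_of_fixed`). Hence `τ a ≠ a`, and `τ s = -s` because `s² ∈ F` while `s ∉ F`.

If `τ lⱼ = -lⱼ` for all `j`, then (U2) reads
`a·l₀·ρ(l₂) + ρ(b)·l₁·ρ(l₀) + ρ(b)·ρ²(b)·l₂·ρ(l₁) = 0`. Applying `τ` changes only the coefficient
`a` into `τ a`, so the difference gives `(a - τ a)·l₀·ρ(l₂) = 0`, i.e. `l₀ = 0` or `l₂ = 0`, and
(U2) then kills one more coefficient. With at most one nonzero coefficient, (U1) is a single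
quadratic equation, and (U2) holds automatically. For `l₀` that equation is `l₀² = -1`; it is
equivalent to `l₀⁴ = 1` because `l₀ = ±1` is not negated by `τ`.
-/

open Matrix NumberField IsDedekindDomain

noncomputable section

theorem mem_range_of_fixed {F L : Type*} [Field F] [Field L] [Algebra F L] [IsGalois F L]
    [FiniteDimensional F L] (σ : L ≃ₐ[F] L) (hgen : ∀ g : L ≃ₐ[F] L, g ∈ Subgroup.zpowers σ)
    (x : L) (h2 : (σ ^ 2) x = x) (h3 : (σ ^ 3) x = x) : x ∈ Set.range (algebraMap F L) := by
  have h1 : σ x = x := by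
    rw [pow_succ', AlgEquiv.mul_apply, h2] at h3
    exact h3
  rw [IsGalois.mem_range_algebraMap_iff_fixed]
  intro g
  have hle : Subgroup.zpowers σ ≤ MulAction.stabilizer (L ≃ₐ[F] L) x := by
    rw [Subgroup.zpowers_le]
    exact h1
  exact hle (hgen g)

/-- The consequence of (U2) alone: if `a` is not fixed by `t` and all `lⱼ` are negated by
`t`, then at most one of them is nonzero. -/
theorem two_coeffs_zero {F L : Type*} [Field F] [Field L] [Algebra F L]
    (r t : L ≃ₐ[F] L) (hcomm : ∀ x, t (r x) = r (t x)) (a b l0 l1 l2 : L)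
    (hta : t a ≠ a) (hb : b ≠ 0) (hbM : t b = b)
    (h0 : t l0 = -l0) (h1 : t l1 = -l1) (h2 : t l2 = -l2)
    (hU2 : a * t l0 * r l2 + r b * t l1 * r l0 + r b * r (r b) * t l2 * r l1 = 0) :
    (l1 = 0 ∧ l2 = 0) ∨ (l0 = 0 ∧ l2 = 0) ∨ (l0 = 0 ∧ l1 = 0) := by
  have hrb : r b ≠ 0 := by simpa using hb
  rw [h0, h1, h2] at hU2
  have hU2t := congrArg t hU2
  simp only [map_add, map_mul, map_neg, hcomm, h0, h1, h2, hbM, map_zero] at hU2t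
  have hprod : (a - t a) * (l0 * r l2) = 0 := by linear_combination hU2t - hU2
  rcases mul_eq_zero.mp hprod with h | h
  · exact absurd (sub_eq_zero.mp h).symm hta
  · rcases mul_eq_zero.mp h with h | h
    · simp [h, hrb] at hU2
      tauto
    · have h' : l2 = 0 := by simpa using h
      simp [h', hrb] at hU2
      tauto

theorem stmt_8
    {F L : Type*} [Field F] [NumberField F] [Field L] [NumberField L]
    [Algebra F L] [IsGalois F L] [FiniteDimensional F L]
    (σ : L ≃ₐ[F] L) (hgen : ∀ g : L ≃ₐ[F] L, g ∈ Subgroup.zpowers σ)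
    (hord : orderOf σ = 6)
    (ρ τ : L → L) (hρ : ∀ x, ρ x = (σ ^ 2) x) (hτ : ∀ x, τ x = (σ ^ 3) x)
    (a b : L) (ha : a ≠ 0) (hb : b ≠ 0)
    (haE : ρ a = a) (hbM : τ b = b)
    (hab : a * τ a = b * ρ b * ρ (ρ b))
    (haF : a ∉ Set.range (algebraMap F L))
    (s : L) (d : F) (hsE : ρ s = s) (hs2 : s ^ 2 = -algebraMap F L d)
    (hsF : s ∉ Set.range (algebraMap F L)) :
    ∀ l0 l1 l2 : L,
      (IsUnitaryCoeffs ρ τ a b l0 l1 l2 ∧ τ l0 = -l0 ∧ τ l1 = -l1 ∧ τ l2 = -l2) ↔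
      ((l1 = 0 ∧ l2 = 0 ∧ (∃ m : L, τ m = m ∧ l0 = s * m) ∧ l0 ^ 4 = 1) ∨
       (l0 = 0 ∧ l2 = 0 ∧ ∃ m : L, τ m = m ∧ l1 = s * m ∧
          algebraMap F L d * ρ b * m ^ 2 = 1) ∨
       (l0 = 0 ∧ l1 = 0 ∧ ∃ m : L, τ m = m ∧ l2 = s * m ∧
          algebraMap F L d * ρ b * ρ (ρ b) * m ^ 2 = 1)) := by
  obtain rfl : ρ = ⇑(σ ^ 2) := funext hρ
  obtain rfl : τ = ⇑(σ ^ 3) := funext hτ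
  have hcomm : ∀ x, (σ ^ 3) ((σ ^ 2) x) = (σ ^ 2) ((σ ^ 3) x) := fun x => by
    rw [← AlgEquiv.mul_apply, ← AlgEquiv.mul_apply, ← pow_add, ← pow_add]
  have hta : (σ ^ 3) a ≠ a := fun h => haF (mem_range_of_fixed σ hgen a haE h)
  have hts : (σ ^ 3) s = -s := by
    have hsq : ((σ ^ 3) s) ^ 2 = s ^ 2 := by
      rw [← map_pow, hs2, map_neg, AlgEquiv.commutes]
    exact (sq_eq_sq_iff_eq_or_eq_neg.mp hsq).resolve_left
      fun h => hsF (mem_range_of_fixed σ hgen s hsE h)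
  have hs0 : s ≠ 0 := fun h => hsF ⟨0, by simp [h]⟩
  generalize σ ^ 2 = r at *
  generalize σ ^ 3 = t at *
  -- The `t`-antiinvariant elements are exactly the multiples of `s` by `t`-invariant ones.
  have hanti : ∀ l : L, t l = -l → ∃ m : L, t m = m ∧ l = s * m := fun l hl =>
    ⟨l / s, by rw [map_div₀, hl, hts, neg_div_neg_eq], by field_simp⟩
  have hanti' : ∀ m : L, t m = m → t (s * m) = -(s * m) := fun m hm => by
    rw [map_mul, hts, hm, neg_mul]
  intro l0 l1 l2
  constructor
  · rintro ⟨⟨hU1, hU2⟩, h0, h1, h2⟩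
    have hz := two_coeffs_zero r t hcomm a b l0 l1 l2 hta hb hbM h0 h1 h2 hU2
    rw [h0, h1, h2] at hU1
    rcases hz with ⟨rfl, rfl⟩ | ⟨rfl, rfl⟩ | ⟨rfl, rfl⟩
    · exact Or.inl ⟨rfl, rfl, hanti l0 h0, by linear_combination (1 - l0 ^ 2) * hU1⟩
    · obtain ⟨m, hm, rfl⟩ := hanti l1 h1
      exact Or.inr (Or.inl ⟨rfl, rfl, m, hm, rfl, by
        linear_combination hU1 + r b * m ^ 2 * hs2⟩)
    · obtain ⟨m, hm, rfl⟩ := hanti l2 h2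
      exact Or.inr (Or.inr ⟨rfl, rfl, m, hm, rfl, by
        linear_combination hU1 + r b * r (r b) * m ^ 2 * hs2⟩)
  · rintro (⟨rfl, rfl, ⟨m, hm, hl⟩, h4⟩ | ⟨rfl, rfl, m, hm, rfl, h⟩ | ⟨rfl, rfl, m, hm, rfl, h⟩)
    · have h0 : t l0 = -l0 := hl ▸ hanti' m hm
      have hne : l0 ^ 2 ≠ 1 := fun h => by
        rcases sq_eq_sq_iff_eq_or_eq_neg.mp (h.trans (one_pow 2).symm) with rfl | rfl <;> norm_num at h0
      have hsq : l0 ^ 2 = -1 := by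
        have : (l0 ^ 2 - 1) * (l0 ^ 2 + 1) = 0 := by linear_combination h4
        exact eq_neg_of_add_eq_zero_left
          ((mul_eq_zero.mp this).resolve_left (sub_ne_zero.mpr hne))
      refine ⟨⟨?_, by simp⟩, h0, by simp, by simp⟩
      rw [h0]
      linear_combination -hsq
    · have h1 := hanti' m hm
      refine ⟨⟨?_, by simp⟩, by simp, h1, by simp⟩
      rw [h1]
      linear_combination h - r b * m ^ 2 * hs2
    · have h2 := hanti' m hm
      refine ⟨⟨?_, by simp⟩, by simp, by simp, h2⟩
      rw [h2]
      linear_combination h - r b * r (r b) * m ^ 2 * hs2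
end
end

section
/- Assume a is not a norm from L, and assume E = F(s) where s ∈ E satisfies s² = −d for some d ∈ F and s ∉ F. If g = g(l0,l1,l2) is unitary and α(g) = g or α(g) = −g, then l1 = l2 = 0, l0 ∈ E and l0⁴ = 1; that is, the eigenvectors of the involution α in the unitary elements are the fourth roots of unity contained in E (viewed as scalar matrices). -/
/-!
Write `D = L ⊕ Lz ⊕ Lz²` with `z l = ρ(l) z`, `z³ = a`, so that `gmat ρ a l0 l1 l2` represents
`l0 + l1 z + l2 z²`.

On unitary elements `α` is the inverse. Hence, if `α(g) = ε g` with `ε = ±1`, then `g² = ε`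
(`gmat_mul_self`). Taking determinants over `L`, `δ = det g` satisfies `δ² = ε³ = ε`, and `δ` is
fixed by `ρ` because `ρ` has odd order (`fixed_of_sq`). Hence `(g - δ)(g + δ) = 0` in `D`. Since
`D` has no zero divisors, `g` is the scalar `±δ`.

That `D` has no zero divisors when `a` is not a norm (`zero_divisor`) is seen as follows.
Suppose `x y = 0` with `x, y ≠ 0`. The rows of the matrix of `x` are the coefficient vectors of
`x, z x, z² x`. If the first two are dependent, `z x = c x` with `c ∈ L`, and then
`a x = z³ x = N(c) x`. If they are independent, the matrix of `y` has a left kernel of dimension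
at least two, hence rank at most one, and `z y = c y` in the same way. Both contradict the
assumption on `a` (`row_eigen`).
-/

open Matrix NumberField IsDedekindDomain

noncomputable section

section Aux

variable {L : Type*} [Field L]

/-- An automorphism of order three cannot send `x` to `-x ≠ 0`. -/
lemma fixed_of_sq [CharZero L] (R : L →+* L) (hR : ∀ x, R (R (R x)) = x) (x : L)
    (h : R (x * x) = x * x) : R x = x := by
  rw [map_mul] at h
  rcases mul_self_eq_mul_self_iff.1 h with h | h
  · exact h
  · have h3 := hR x
    simp only [h, map_neg, neg_neg] at h3
    have hx : x = 0 := by linear_combination (-1 / 2 : L) * h3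
    simp [hx]

/-- If `z x = c x` in `D` with `c ∈ L`, then `x = 0`, since otherwise `a = N(c)`. -/
lemma row_eigen (R : L →+* L) (hR : ∀ x, R (R (R x)) = x) (a : L) (haE : R a = a)
    (hnn : ¬∃ x : L, NormLE R x = a) (c x0 x1 x2 : L)
    (h0 : a * R x2 = c * x0) (h1 : R x0 = c * x1) (h2 : R x1 = c * x2) :
    x0 = 0 ∧ x1 = 0 ∧ x2 = 0 := by
  have inj : ∀ x, R x = 0 → x = 0 := fun x hx => (map_eq_zero R).1 hx
  have key : (NormLE R c - a) * x2 = 0 := by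
    have e := congrArg (fun t => R (R t)) h0
    simp only [map_mul, haE, hR, h1, h2] at e
    unfold NormLE
    linear_combination -e
  rcases mul_eq_zero.1 key with h | h
  · exact absurd ⟨c, sub_eq_zero.1 h⟩ hnn
  · subst h
    have hx1 : x1 = 0 := inj _ (by rw [h2, mul_zero])
    subst hx1
    exact ⟨inj _ (by rw [h1, mul_zero]), rfl, rfl⟩

lemma gmat_zero_two (R : L → L) (a l0 l1 l2 : L) : gmat R a l0 l1 l2 0 2 = l2 := by
  simp [gmat]

/-- The matrices `gmat` multiply like elements of the cyclic algebra. -/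
lemma gmat_mul (R : L →+* L) (hR : ∀ x, R (R (R x)) = x) (a : L) (haE : R a = a)
    (x0 x1 x2 y0 y1 y2 : L) :
    gmat R a x0 x1 x2 * gmat R a y0 y1 y2 =
      gmat R a (x0 * y0 + x1 * (a * R y2) + x2 * (a * R (R y1)))
        (x0 * y1 + x1 * R y0 + x2 * (a * R (R y2)))
        (x0 * y2 + x1 * R y1 + x2 * R (R y0)) := by
  ext i j
  fin_cases i <;> fin_cases j <;>
    simp [gmat, Matrix.mul_apply, Fin.sum_univ_three, hR, haE] <;> ring

/-- The cyclic algebra has no zero divisors when `a` is not a norm. -/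
lemma zero_divisor (R : L →+* L) (hR : ∀ x, R (R (R x)) = x) (a : L) (haE : R a = a)
    (hnn : ¬∃ x : L, NormLE R x = a) (x0 x1 x2 y0 y1 y2 : L)
    (h : gmat R a x0 x1 x2 * gmat R a y0 y1 y2 = 0) :
    (x0 = 0 ∧ x1 = 0 ∧ x2 = 0) ∨ (y0 = 0 ∧ y1 = 0 ∧ y2 = 0) := by
  have e : ∀ i j, (gmat R a x0 x1 x2 * gmat R a y0 y1 y2) i j = 0 := by
    intro i j; rw [h]; rfl
  have e00 := e 0 0
  have e01 := e 0 1
  have e02 := e 0 2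
  have e10 := e 1 0
  have e11 := e 1 1
  have e12 := e 1 2
  simp [gmat, Matrix.mul_apply, Fin.sum_univ_three] at e00 e01 e02 e10 e11 e12
  -- The cross product of the first two rows of the matrix of `x`.
  set w0 := x1 * R x1 - x2 * R x0 with hw0
  set w1 := x2 * (a * R x2) - x0 * R x1 with hw1
  set w2 := x0 * R x0 - x1 * (a * R x2) with hw2
  by_cases hw : w0 = 0 ∧ w1 = 0 ∧ w2 = 0
  · left
    obtain ⟨z0, z1, z2⟩ := hw
    rw [hw0] at z0
    rw [hw1] at z1
    rw [hw2] at z2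
    by_cases p0 : x0 = 0
    · by_cases p1 : x1 = 0
      · by_cases p2 : x2 = 0
        · exact ⟨p0, p1, p2⟩
        · refine row_eigen R hR a haE hnn (R x1 / x2) x0 x1 x2 ?_ ?_ ?_
          · field_simp; linear_combination z1
          · field_simp; linear_combination -z0
          · field_simp
      · refine row_eigen R hR a haE hnn (R x0 / x1) x0 x1 x2 ?_ ?_ ?_
        · field_simp; linear_combination -z2
        · field_simp
        · field_simp; linear_combination z0
    · refine row_eigen R hR a haE hnn (a * R x2 / x0) x0 x1 x2 ?_ ?_ ?_
      · field_simp
      · field_simp; linear_combination z2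
      · field_simp; linear_combination -z1
  · right
    -- Each column of the matrix of `y` is orthogonal to both rows, hence a multiple of `w`.
    have m0 : w0 * R y0 = w1 * y1 := by
      rw [hw0, hw1]; linear_combination R x1 * e01 - x2 * e11
    have m1 : w0 * R y1 = w1 * y2 := by
      rw [hw0, hw1]; linear_combination R x1 * e02 - x2 * e12
    have m2 : w0 * (a * R y2) = w1 * y0 := by
      rw [hw0, hw1]; linear_combination R x1 * e00 - x2 * e10
    have n0 : w0 * (a * R (R y1)) = w2 * y0 := by
      rw [hw0, hw2]; linear_combination x1 * e10 - R x0 * e00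
    have n1 : w0 * (a * R (R y2)) = w2 * y1 := by
      rw [hw0, hw2]; linear_combination x1 * e11 - R x0 * e01
    have n2 : w0 * R (R y0) = w2 * y2 := by
      rw [hw0, hw2]; linear_combination x1 * e12 - R x0 * e02
    by_cases p0 : w0 = 0
    · simp only [p0, zero_mul, zero_eq_mul, true_and] at hw m0 m1 m2 n0 n1 n2
      tauto
    · refine row_eigen R hR a haE hnn (w1 / w0) y0 y1 y2 ?_ ?_ ?_
      · field_simp; linear_combination m2
      · field_simp; linear_combination m0
      · field_simp; linear_combination m1

/-- A unitary `g` with `α(g) = ε g` satisfies `g² = ε`: the conditions (U1) and (U2) give two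
coefficients of `g²`, and applying `τ` to the second of these gives the third. -/
lemma gmat_mul_self (R T : L →+* L) (hR : ∀ x, R (R (R x)) = x)
    (hRT : ∀ x, T (R x) = R (T x)) (a b ε : L) (ha : a ≠ 0) (hb : b ≠ 0) (haE : R a = a)
    (hε : ε * ε = 1) (hRε : R ε = ε) (l0 l1 l2 : L)
    (t0 : T l0 = ε * l0) (t1 : T l1 = ε * (a * R l2) / R b)
    (t2 : T l2 = ε * (a * R (R l1)) / (R b * R (R b)))
    (hU : IsUnitaryCoeffs R T a b l0 l1 l2) :
    gmat R a l0 l1 l2 * gmat R a l0 l1 l2 = ε • (1 : Matrix (Fin 3) (Fin 3) L) := by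
  obtain ⟨u1, u2⟩ := hU
  have hb1 : R b ≠ 0 := (map_ne_zero R).2 hb
  have hb2 : R (R b) ≠ 0 := (map_ne_zero R).2 hb1
  rw [t0, t1, t2] at u1 u2
  field_simp at u1 u2
  have hε0 : ε ≠ 0 := by rintro rfl; simp at hε
  have third : l0 * l2 + l1 * R l1 + l2 * R (R l0) = 0 := by
    have h : R l0 * R l2 + R l1 * R (R l1) + R l2 * l0 = 0 := by
      have : ε * a * (R l0 * R l2 + R l1 * R (R l1) + R l2 * l0) = 0 := by
        linear_combination u2
      simpa [hε0, ha] using this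
    have h' := congrArg (fun t => R (R t)) h
    simpa [map_add, map_mul, hR] using h'
  have second : l0 * l1 + l1 * R l0 + l2 * (a * R (R l2)) = 0 := by
    have h' := congrArg (fun t => R (T t)) third
    simp only [map_add, map_mul, hRT, t0, t1, t2, hR, hRε, haE, map_zero, map_div₀] at h'
    field_simp at h'
    have h'' : a * (l0 * l1 + l1 * R l0 + l2 * (a * R (R l2))) = 0 := by
      linear_combination h' - (a * (l0 * l1 + l1 * R l0 + l2 * (a * R (R l2)))) * hε
    simpa [ha] using h''
  have first : l0 * l0 + l1 * (a * R l2) + l2 * (a * R (R l1)) = ε := by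
    linear_combination ε * u1 - (l0 * l0 + l1 * (a * R l2) + l2 * (a * R (R l1))) * hε
  rw [gmat_mul R hR a haE, first, second, third]
  ext i j
  fin_cases i <;> fin_cases j <;> simp [gmat, hRε]

/-- The eigenvector statement for commuting `R` and `T` with `R³ = 1`, with `α(g) = ε g` written
out on coefficients. -/
lemma eigen_core [CharZero L] (R T : L →+* L) (hR : ∀ x, R (R (R x)) = x)
    (hRT : ∀ x, T (R x) = R (T x)) (a b ε : L) (ha : a ≠ 0)
    (hb : b ≠ 0) (haE : R a = a)
    (hnn : ¬∃ x : L, NormLE R x = a) (hε : ε * ε = 1) (hRε : R ε = ε)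
    (l0 l1 l2 : L) (hU : IsUnitaryCoeffs R T a b l0 l1 l2) (e0 : T l0 = ε * l0)
    (e1 : a⁻¹ * b * R (R b) * R (T l2) = ε * l1)
    (e2 : a⁻¹ * b * R (R (T l1)) = ε * l2) :
    l1 = 0 ∧ l2 = 0 ∧ R l0 = l0 ∧ l0 ^ 4 = 1 := by
  -- Once `l1` and `l2` vanish, (U1) reads `l0 * T l0 = 1`, that is, `l0² = ε`.
  suffices h : l1 = 0 ∧ l2 = 0 by
    obtain ⟨rfl, rfl⟩ := h
    have u1 := hU.1
    simp only [map_zero, mul_zero, add_zero, e0] at u1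
    have hsq : l0 * l0 = ε := by linear_combination ε * u1 - l0 * l0 * hε
    refine ⟨rfl, rfl, fixed_of_sq R hR _ (by rw [hsq, hRε]), ?_⟩
    linear_combination (l0 * l0 + ε) * hsq + hε
  have hb1 : R b ≠ 0 := (map_ne_zero R).2 hb
  have hb2 : R (R b) ≠ 0 := (map_ne_zero R).2 hb1
  have f1 : R (T l2) = ε * a * l1 / (b * R (R b)) := by
    field_simp at e1 ⊢; linear_combination e1
  have f2 : R (R (T l1)) = ε * a * l2 / b := by
    field_simp at e2 ⊢; linear_combination e2
  have t2 : T l2 = ε * (a * R (R l1)) / (R b * R (R b)) := by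
    rw [← hR (T l2), f1]; simp only [map_mul, map_div₀, hRε, haE, hR]; ring
  have t1 : T l1 = ε * (a * R l2) / R b := by
    rw [← hR (T l1), f2]; simp only [map_mul, map_div₀, hRε, haE]; ring
  have hsq := gmat_mul_self R T hR hRT a b ε ha hb haE hε hRε l0 l1 l2 e0 t1 t2 hU
  set A := gmat R a l0 l1 l2 with hA
  set δ := A.det with hδ
  have hδ2 : δ * δ = ε := by
    have := congrArg Matrix.det hsq
    rw [Matrix.det_mul, Matrix.det_smul, Matrix.det_one, Fintype.card_fin] at this
    linear_combination this + ε * hε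
  have hRδ : R δ = δ := fixed_of_sq R hR δ (by rw [hδ2, hRε])
  have hm : gmat R a (l0 - δ) l1 l2 = A - δ • (1 : Matrix (Fin 3) (Fin 3) L) := by
    ext i j; fin_cases i <;> fin_cases j <;> simp [hA, gmat, hRδ]
  have hp : gmat R a (l0 + δ) l1 l2 = A + δ • (1 : Matrix (Fin 3) (Fin 3) L) := by
    ext i j; fin_cases i <;> fin_cases j <;> simp [hA, gmat, hRδ]
  have hz : gmat R a (l0 - δ) l1 l2 * gmat R a (l0 + δ) l1 l2 = 0 := by
    rw [hm, hp, sub_mul, mul_add, mul_add, hsq]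
    simp only [smul_mul_assoc, mul_smul_comm, one_mul, mul_one, smul_smul, hδ2]
    abel
  rcases zero_divisor R hR a haE hnn _ _ _ _ _ _ hz with h | h
  · exact h.2
  · exact h.2

end Aux

theorem stmt_10
    {F L : Type*} [Field F] [NumberField F] [Field L] [NumberField L]
    [Algebra F L] [IsGalois F L] [FiniteDimensional F L]
    (σ : L ≃ₐ[F] L) (hgen : ∀ g : L ≃ₐ[F] L, g ∈ Subgroup.zpowers σ)
    (hord : orderOf σ = 6)
    (ρ τ : L → L) (hρ : ∀ x, ρ x = (σ ^ 2) x) (hτ : ∀ x, τ x = (σ ^ 3) x)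
    (a b : L) (ha : a ≠ 0) (hb : b ≠ 0)
    (haE : ρ a = a) (hbM : τ b = b)
    (hab : a * τ a = b * ρ b * ρ (ρ b))
    (hnn : ¬∃ x : L, NormLE ρ x = a)
    (s : L) (d : F) (hsE : ρ s = s) (hs2 : s ^ 2 = -algebraMap F L d)
    (hsF : s ∉ Set.range (algebraMap F L)) :
    ∀ l0 l1 l2 : L, IsUnitaryCoeffs ρ τ a b l0 l1 l2 →
      (alphaMat ρ τ a b l0 l1 l2 = gmat ρ a l0 l1 l2 ∨
        alphaMat ρ τ a b l0 l1 l2 = -gmat ρ a l0 l1 l2) →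
      l1 = 0 ∧ l2 = 0 ∧ ρ l0 = l0 ∧ l0 ^ 4 = 1 := by
  intro l0 l1 l2 hU hα
  obtain rfl : ρ = ⇑(RingHomClass.toRingHom (σ ^ 2)) := funext hρ
  obtain rfl : τ = ⇑(RingHomClass.toRingHom (σ ^ 3)) := funext hτ
  have h6 : σ ^ 6 = 1 := hord ▸ pow_orderOf_eq_one σ
  have hR : ∀ x, (σ ^ 2) ((σ ^ 2) ((σ ^ 2) x)) = x := by
    intro x
    rw [← AlgEquiv.mul_apply, ← AlgEquiv.mul_apply, ← pow_add, ← pow_add, h6,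
      AlgEquiv.one_apply]
  have hRT : ∀ x, (σ ^ 3) ((σ ^ 2) x) = (σ ^ 2) ((σ ^ 3) x) := by
    intro x
    rw [← AlgEquiv.mul_apply, ← AlgEquiv.mul_apply, ← pow_add, ← pow_add]
  rcases hα with hα | hα
  · have c0 := congrFun (congrFun hα 0) 0
    have c1 := congrFun (congrFun hα 0) 1
    have c2 := congrFun (congrFun hα 0) 2
    rw [alphaMat, gmat_zero_two, gmat_zero_two] at c2
    refine eigen_core _ _ hR hRT a b 1 ha hb haE hnn (by ring) (map_one _) l0 l1 l2 hU ?_ ?_ ?_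
    · simpa [alphaMat, gmat] using c0
    · rw [one_mul]; exact c1
    · rw [one_mul]; exact c2
  · have c0 := congrFun (congrFun hα 0) 0
    have c1 := congrFun (congrFun hα 0) 1
    have c2 := congrFun (congrFun hα 0) 2
    rw [alphaMat, Matrix.neg_apply, gmat_zero_two, gmat_zero_two] at c2
    refine eigen_core _ _ hR hRT a b (-1) ha hb haE hnn (by ring) (by simp) l0 l1 l2 hU ?_ ?_ ?_
    · rw [neg_one_mul]; exact c0
    · rw [neg_one_mul]; exact c1
    · rw [neg_one_mul]; exact c2
end
end

section
/- Assume a is not a norm from L. Then for every nonzero q ∈ F, the element a·q is not a norm from L; that is, there is no x ∈ L with N_{L/E}(x) = a·q. -/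
open Matrix NumberField IsDedekindDomain

noncomputable section

/-!
Write `N = NormLE ρ`. Modulo norms from `L`, the class of `a` is killed by `3`, since `ρ a = a` gives
`N a = a ^ 3`; so `a` is a norm as soon as `a ^ 2` is. If `N x = a * q` with `q ∈ F` nonzero, then
applying `τ`, which commutes with `ρ` and fixes `q`, gives `N (τ x) = τ a * q`, hence
`N (x / τ x) = a / τ a`. Multiplying by `a * τ a = N b` shows `a ^ 2 = N (b * x / τ x)`, and therefore
`a = a ^ 3 / a ^ 2 = N (a * τ x / (b * x))`.
-/

theorem stmt_12
    {F L : Type*} [Field F] [NumberField F] [Field L] [NumberField L]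
    [Algebra F L] [IsGalois F L] [FiniteDimensional F L]
    (σ : L ≃ₐ[F] L) (hgen : ∀ g : L ≃ₐ[F] L, g ∈ Subgroup.zpowers σ)
    (hord : orderOf σ = 6)
    (ρ τ : L → L) (hρ : ∀ x, ρ x = (σ ^ 2) x) (hτ : ∀ x, τ x = (σ ^ 3) x)
    (a b : L) (ha : a ≠ 0) (hb : b ≠ 0)
    (haE : ρ a = a) (hbM : τ b = b)
    (hab : a * τ a = b * ρ b * ρ (ρ b))
    (hnn : ¬∃ x : L, NormLE ρ x = a) :
    ∀ q : F, q ≠ 0 → ¬∃ x : L, NormLE ρ x = a * algebraMap F L q := by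
  rintro q hq ⟨x, hx⟩
  refine hnn ⟨a * τ x / (b * x), ?_⟩
  have hcomm : ∀ y, ρ (τ y) = τ (ρ y) := fun y => by
    simp only [hρ, hτ, ← AlgEquiv.mul_apply, ← pow_add]
  have hρmul : ∀ y z, ρ (y * z) = ρ y * ρ z := fun y z => by simp only [hρ, map_mul]
  have hρdiv : ∀ y z, ρ (y / z) = ρ y / ρ z := fun y z => by simp only [hρ, map_div₀]
  have hτmul : ∀ y z, τ (y * z) = τ y * τ z := fun y z => by simp only [hτ, map_mul]
  have hτq : τ (algebraMap F L q) = algebraMap F L q := by rw [hτ, AlgEquiv.commutes]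
  have hq' : algebraMap F L q ≠ 0 := by simpa using hq
  have hNx : x * ρ x * ρ (ρ x) = a * algebraMap F L q := hx
  have hNτx : τ x * ρ (τ x) * ρ (ρ (τ x)) = τ a * algebraMap F L q := by
    rw [hcomm, hcomm, ← hτmul, ← hτmul, hNx, hτmul, hτq]
  have hτa : τ a ≠ 0 := by simpa [hτ] using ha
  calc NormLE ρ (a * τ x / (b * x))
      = a ^ 3 * (τ x * ρ (τ x) * ρ (ρ (τ x)))
          / ((b * ρ b * ρ (ρ b)) * (x * ρ x * ρ (ρ x))) := by
        simp only [NormLE, hρdiv, hρmul, haE, div_mul_div_comm]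
        congr 1 <;> ring
    _ = a := by
        rw [hNτx, hNx, ← hab]
        field_simp
end
end

section
/- Let q be a prime power with q ≡ 5 (mod 6), and let K be a finite field with q² elements; for x ∈ K write x̄ := x^q (the q-power Frobenius, an involutory automorphism of K whose fixed field has q elements). Let b ∈ K with b̄ = b and b ≠ 0, and let a ∈ K with ā ≠ a and a·ā = b³. If l0, l1, l2 ∈ K satisfy l0·l̄0 + b·l1·l̄1 + b²·l2·l̄2 = 0 and a·l̄0·l2 + b·l̄1·l0 + b²·l̄2·l1 = 0, then l0 = l1 = l2 = 0. -/
/-!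
Write `x̄ = x ^ q`. In `A = K[t] / (t ^ 3 - a)` extend conjugation by `t̄ = b / t`, which is
consistent because `a * ā = b ^ 3`. For `l = l0 + l1 * t + l2 * t ^ 2` the hypotheses (and the
conjugate of the second one) say precisely that the three coefficients of `l * l̄` vanish, so
`l * l̄ = 0` in `A`. With denominators cleared, `l̄` becomes
`t ^ 2 * l̄ = l̄0 * t ^ 2 + b * l̄1 * t + b ^ 2 * l̄2`.

* If `a` is not a cube in `K`, then `X ^ 3 - a` is irreducible, `A` is a field, and `l = 0` or
  `l̄ = 0`; either way all coefficients vanish (`coeffs_eq_zero_of_not_cube`).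
* If `a` is a cube, it has three distinct cube roots in `K`, since `3 ∣ q ^ 2 - 1`. Every such root
  `r` satisfies `r * r̄ = b`: both sides are fixed by conjugation and have the same cube, and cubing
  is injective on the fixed field as `q ≡ 2 (mod 3)` (`eq_of_cube_eq`). So evaluation at `r`
  commutes with conjugation, and `l(r) ^ (q + 1) = 0`, hence `l(r) = 0`. A polynomial of degree at most
  two with three roots is zero.
-/

open Polynomial in
/-- If `X ^ 3 - a` has no root in `K`, then it is prime, and it cannot divide a product of two
nonzero polynomials of degree at most two. The hypotheses say that the remainder of
`(x0 + x1 X + x2 X ^ 2) * (y0 + y1 X + y2 X ^ 2)` modulo `X ^ 3 - a` is zero. -/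
lemma coeffs_eq_zero_of_not_cube {K : Type*} [Field K] {a : K} (ha : ∀ c : K, c ^ 3 ≠ a)
    {x0 x1 x2 y0 y1 y2 : K}
    (e0 : x0 * y0 + a * (x1 * y2 + x2 * y1) = 0)
    (e1 : x0 * y1 + x1 * y0 + a * (x2 * y2) = 0)
    (e2 : x0 * y2 + x1 * y1 + x2 * y0 = 0) :
    (x0 = 0 ∧ x1 = 0 ∧ x2 = 0) ∨ (y0 = 0 ∧ y1 = 0 ∧ y2 = 0) := by
  have hirr : Irreducible (X ^ 3 - C a : K[X]) :=
    X_pow_sub_C_irreducible_of_prime Nat.prime_three ha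
  have key : ∀ z0 z1 z2 : K, (X ^ 3 - C a : K[X]) ∣ C z2 * X ^ 2 + C z1 * X + C z0 →
      z0 = 0 ∧ z1 = 0 ∧ z2 = 0 := by
    intro z0 z1 z2 hd
    have hz : C z2 * X ^ 2 + C z1 * X + C z0 = 0 := by
      refine eq_zero_of_dvd_of_degree_lt hd ?_
      rw [degree_X_pow_sub_C (by norm_num) a]
      exact degree_quadratic_lt
    refine ⟨?_, ?_, ?_⟩
    · simpa [coeff_X, coeff_C] using congrArg (fun f => coeff f 0) hz
    · simpa [coeff_X, coeff_C] using congrArg (fun f => coeff f 1) hz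
    · simpa [coeff_X, coeff_C] using congrArg (fun f => coeff f 2) hz
  have hdvd : (X ^ 3 - C a : K[X]) ∣
      (C x2 * X ^ 2 + C x1 * X + C x0) * (C y2 * X ^ 2 + C y1 * X + C y0) := by
    refine ⟨C (x2 * y2) * X + C (x1 * y2 + x2 * y1), ?_⟩
    have f0 := congrArg (C : K → K[X]) e0
    have f1 := congrArg (C : K → K[X]) e1
    have f2 := congrArg (C : K → K[X]) e2
    simp only [map_add, map_mul, map_zero] at f0 f1 f2 ⊢
    linear_combination f0 + X * f1 + X ^ 2 * f2
  exact (hirr.prime.dvd_or_dvd hdvd).imp (key _ _ _) (key _ _ _)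

/-- When `q ≡ 5 (mod 6)`, cubing is injective on the elements fixed by `x ↦ x ^ q`: its inverse is
`x ↦ x ^ ((2 * q - 1) / 3)`. -/
lemma eq_of_cube_eq {K : Type*} [Field K] {q : ℕ} (hmod : q % 6 = 5) {x y : K}
    (hx : x ^ q = x) (hy : y ^ q = y) (hxy : x ^ 3 = y ^ 3) (hy0 : y ≠ 0) : x = y := by
  obtain ⟨k, rfl⟩ : ∃ k, q = 6 * k + 5 := ⟨q / 6, by omega⟩
  have hx0 : x ≠ 0 := by
    rintro rfl
    exact hy0 (by simpa using hxy.symm)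
  have root : ∀ z : K, z ≠ 0 → z ^ (6 * k + 5) = z → (z ^ 3) ^ (4 * k + 3) = z := by
    intro z hz h
    refine mul_left_cancel₀ hz ?_
    calc z * (z ^ 3) ^ (4 * k + 3) = (z ^ (6 * k + 5)) ^ 2 := by ring
      _ = z * z := by rw [h, sq]
  rw [← root x hx0 hx, hxy, root y hy0 hy]

lemma add_pow_of_card {q : ℕ} (hq : IsPrimePow q) {K : Type*} [Field K] [Fintype K]
    (hcard : Fintype.card K = q ^ 2) (x y : K) : (x + y) ^ q = x ^ q + y ^ q := by
  obtain ⟨p, n, hp, hn, rfl⟩ := hq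
  have hp' : p.Prime := hp.nat_prime
  have h0 : ((p : ℕ) : K) = 0 := by
    have h := FiniteField.cast_card_eq_zero K
    rw [hcard] at h
    push_cast at h
    exact eq_zero_of_pow_eq_zero (eq_zero_of_pow_eq_zero h)
  have : Fact p.Prime := ⟨hp'⟩
  have : CharP K p := by
    have hd : ringChar K ∣ p := ringChar.dvd h0
    rcases (Nat.dvd_prime hp').1 hd with h | h
    · exact absurd h (CharP.ringChar_ne_one)
    · exact h ▸ ringChar.charP K
  exact add_pow_char_pow x y p n

lemma exists_primitive_cube_root {q : ℕ} (hmod : q % 6 = 5) {K : Type*} [Field K] [Fintype K]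
    (hcard : Fintype.card K = q ^ 2) : ∃ w : K, w ^ 3 = 1 ∧ w ≠ 1 := by
  classical
  have : Fact (Nat.Prime 3) := ⟨Nat.prime_three⟩
  have h3 : 3 ∣ Fintype.card Kˣ := by
    rw [Fintype.card_units, hcard]
    obtain ⟨k, rfl⟩ : ∃ k, q = 6 * k + 5 := ⟨q / 6, by omega⟩
    refine ⟨12 * k ^ 2 + 20 * k + 8, ?_⟩
    have : (6 * k + 5) ^ 2 = 3 * (12 * k ^ 2 + 20 * k + 8) + 1 := by ring
    omega
  obtain ⟨u, hu⟩ := exists_prime_orderOf_dvd_card 3 h3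
  refine ⟨u, ?_, ?_⟩
  · have := pow_orderOf_eq_one u
    rw [hu] at this
    rw [← Units.val_pow_eq_pow_val, this, Units.val_one]
  · intro h
    have : u = 1 := Units.ext h
    rw [this, orderOf_one] at hu
    omega

theorem stmt_16 (q : ℕ) (hq : IsPrimePow q) (hmod : q % 6 = 5)
    (K : Type*) [Field K] [Fintype K] (hcard : Fintype.card K = q ^ 2)
    (b : K) (hbfix : b ^ q = b) (hb : b ≠ 0)
    (a : K) (hafix : a ^ q ≠ a) (hab : a * a ^ q = b ^ 3)
    (l0 l1 l2 : K)
    (h1 : l0 * l0 ^ q + b * (l1 * l1 ^ q) + b ^ 2 * (l2 * l2 ^ q) = 0)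
    (h2 : a * l0 ^ q * l2 + b * l1 ^ q * l0 + b ^ 2 * l2 ^ q * l1 = 0) :
    l0 = 0 ∧ l1 = 0 ∧ l2 = 0 := by
  have hq0 : q ≠ 0 := by omega
  have hadd : ∀ x y : K, (x + y) ^ q = x ^ q + y ^ q := add_pow_of_card hq hcard
  have hinv : ∀ x : K, (x ^ q) ^ q = x := by
    intro x
    rw [← pow_mul, ← sq, ← hcard, FiniteField.pow_card]
  have ha0 : a ≠ 0 := by
    rintro rfl
    exact hafix (zero_pow hq0)
  -- the conjugate of `h2`
  have h3 : a ^ q * l0 * l2 ^ q + b * l1 * l0 ^ q + b ^ 2 * l2 * l1 ^ q = 0 := by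
    have h := congrArg (· ^ q) h2
    simp only [hadd, mul_pow, zero_pow hq0, hinv, hbfix, pow_right_comm b 2 q] at h
    exact h
  have e0 : l0 * (b ^ 2 * l2 ^ q) + a * (l1 * l0 ^ q + l2 * (b * l1 ^ q)) = 0 := by
    refine mul_left_cancel₀ hb ?_
    linear_combination a * h3 - l0 * l2 ^ q * hab
  have e1 : l0 * (b * l1 ^ q) + l1 * (b ^ 2 * l2 ^ q) + a * (l2 * l0 ^ q) = 0 := by
    linear_combination h2
  have e2 : l0 * l0 ^ q + l1 * (b * l1 ^ q) + l2 * (b ^ 2 * l2 ^ q) = 0 := by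
    linear_combination h1
  by_cases hc : ∃ c : K, c ^ 3 = a
  · obtain ⟨c, hc⟩ := hc
    have hc0 : c ≠ 0 := by
      rintro rfl
      exact ha0 (by simpa using hc.symm)
    -- `l` vanishes at every cube root of `a`
    have root : ∀ r : K, r ^ 3 = a → l0 + l1 * r + l2 * r ^ 2 = 0 := by
      intro r hr
      have hrr : r * r ^ q = b := by
        refine eq_of_cube_eq hmod ?_ hbfix ?_ hb
        · rw [mul_pow, hinv, mul_comm]
        · rw [mul_pow, pow_right_comm r q 3, hr, hab]
      refine eq_zero_of_pow_eq_zero (n := q + 1) ?_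
      have hr0 : r ≠ 0 := by
        rintro rfl
        exact hb (by simpa using hrr.symm)
      rw [pow_succ, hadd, hadd, mul_pow, mul_pow, pow_right_comm r 2 q]
      refine mul_left_cancel₀ (pow_ne_zero 2 hr0) ?_
      rw [← hr] at e0 e1
      rw [← hrr] at e0 e1 e2
      linear_combination e0 + r * e1 + r ^ 2 * e2
    obtain ⟨w, hw, hw1⟩ := exists_primitive_cube_root hmod hcard
    have hw0 : w ≠ 0 := by
      rintro rfl
      simp at hw
    have r1 := root c hc
    have r2 := root (c * w) (by rw [mul_pow, hw, hc, mul_one])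
    have r3 := root (c * w ^ 2) (by rw [mul_pow, ← pow_mul, mul_comm 2 3, pow_mul, hw, hc]; ring)
    -- divided differences of `l` at the nodes `c`, `c * w`, `c * w ^ 2`
    have hd : w - 1 ≠ 0 := sub_ne_zero.2 hw1
    have d1 : l1 + l2 * (c + c * w) = 0 := by
      refine mul_left_cancel₀ (mul_ne_zero hc0 hd) ?_
      linear_combination r2 - r1
    have d2 : l1 + l2 * (c * w + c * w ^ 2) = 0 := by
      refine mul_left_cancel₀ (mul_ne_zero (mul_ne_zero hc0 hw0) hd) ?_
      linear_combination r3 - r2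
    have hw2 : w ^ 2 - 1 ≠ 0 := by
      intro h
      exact hw1 (by linear_combination hw - w * h)
    have hl2 : l2 = 0 := by
      refine mul_left_cancel₀ (mul_ne_zero hc0 hw2) ?_
      linear_combination d2 - d1
    have hl1 : l1 = 0 := by simpa [hl2] using d1
    exact ⟨by simpa [hl1, hl2] using r1, hl1, hl2⟩
  · push Not at hc
    rcases coeffs_eq_zero_of_not_cube hc e0 e1 e2 with h | ⟨g0, g1, g2⟩
    · exact h
    · refine ⟨eq_zero_of_pow_eq_zero g2, ?_, ?_⟩
      · exact eq_zero_of_pow_eq_zero ((mul_eq_zero.1 g1).resolve_left hb)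
      · exact eq_zero_of_pow_eq_zero ((mul_eq_zero.1 g0).resolve_left (pow_ne_zero 2 hb))
end

section
/- Let K be a finite field of odd characteristic whose cardinality is not congruent to 1 modulo 3 (so K contains no primitive third root of unity). Let R := K[ε] be the ring of dual numbers over K (ε² = 0), and define conjugation on R by (x + y·ε)‾ := x − y·ε for x, y ∈ K. Let b ∈ K with b ≠ 0, and let a = a₀ + a₁·ε ∈ R with a₁ ≠ 0 and a·ā = b³ (equivalently a₀² = b³). If l0, l1, l2 ∈ R satisfy l0·l̄0 + b·l1·l̄1 + b²·l2·l̄2 = 0 and a·l̄0·l2 + b·l̄1·l0 + b²·l̄2·l1 = 0, then l0, l1, l2 all lie in ε·R, i.e. the K-components (constant terms) of l0, l1, l2 are all zero. -/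
/-!
Write `l_i = x_i + y_i ε` and `a = a₀ + a₁ ε`. Since `a₀² = b³`, the element `c = a₀ / b` satisfies
`b = c²` and `a₀ = c³`. With `X = x₀`, `Y = c x₁`, `Z = c² x₂` the constant terms of the two
equations read `X² + Y² + Z² = 0` and `XY + YZ + ZX = 0`, so `(X + Y + Z)² = 0`, and
`Z = -(X + Y)` gives `X² + XY + Y² = 0`, hence `X³ = Y³`. As `|K| ≢ 1 (mod 3)`, cubing is injective
on `K` (`cube_inj`), so `X = Y`, and likewise `Y = Z`. Outside characteristic 3 this already forces
`X = 0`; to cover all characteristics at once, substitute `X = Y = Z` in the `ε`-coefficient of the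
second equation: every term containing some `y_i` cancels, leaving `a₁ x₀ x₂ = 0`, that is
`a₁ X² = 0`.
-/

/-- Conjugation `x + y·ε ↦ x − y·ε` on the ring of dual numbers. -/
noncomputable def dualConj {K : Type*} [Field K] (r : DualNumber K) : DualNumber K :=
  TrivSqZeroExt.inl r.fst - TrivSqZeroExt.inr r.snd

/-- An element killed by both the exponent `3` and the exponent `|K| - 1`, which are coprime,
is trivial; so cubing is injective on `K`. -/
lemma cube_inj {K : Type*} [Field K] [Fintype K] (hcard : Fintype.card K % 3 ≠ 1)
    {x y : K} (h : x ^ 3 = y ^ 3) : x = y := by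
  by_cases hy : y = 0
  · subst hy
    simpa using h
  have hx : x ≠ 0 := by
    rintro rfl
    exact hy (by simpa using h.symm)
  have h3 : (x / y) ^ 3 = 1 := by
    rw [div_pow, h, div_self (pow_ne_zero _ hy)]
  have hq := FiniteField.pow_card_sub_one_eq_one (x / y) (div_ne_zero hx hy)
  have hco : Nat.Coprime 3 (Fintype.card K - 1) := by
    rw [Nat.Prime.coprime_iff_not_dvd Nat.prime_three]
    have := Fintype.one_lt_card (α := K)
    omega
  have := pow_gcd_eq_one.2 ⟨h3, hq⟩
  rw [Nat.Coprime.gcd_eq_one hco, pow_one] at this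
  exact (div_eq_one_iff_eq hy).1 this

/-- The equations force the three rescaled constant terms to agree. -/
lemma eq_of_sum_sq_eq_zero {K : Type*} [Field K] [Fintype K] (hcard : Fintype.card K % 3 ≠ 1)
    {X Y Z : K} (h1 : X ^ 2 + Y ^ 2 + Z ^ 2 = 0) (h2 : X * Y + Y * Z + Z * X = 0) :
    X = Y ∧ Y = Z := by
  have hs : X + Y + Z = 0 := by
    apply pow_eq_zero_iff (two_ne_zero) |>.1
    linear_combination h1 + 2 * h2
  constructor <;> apply cube_inj hcard
  -- `X² + XY + Y² = (X + Y)(X + Y + Z) - (XY + YZ + ZX)`, and cyclically.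
  · linear_combination (X - Y) * ((X + Y) * hs - h2)
  · linear_combination (Y - Z) * ((Y + Z) * hs - h2)

theorem stmt_17 (K : Type*) [Field K] [Fintype K]
    (hodd : Odd (ringChar K)) (hcard : Fintype.card K % 3 ≠ 1)
    (b : K) (hb : b ≠ 0)
    (a : DualNumber K) (ha1 : a.snd ≠ 0)
    (hab : a * dualConj a = TrivSqZeroExt.inl b ^ 3)
    (l0 l1 l2 : DualNumber K)
    (h1 : l0 * dualConj l0 + TrivSqZeroExt.inl b * (l1 * dualConj l1) +
      TrivSqZeroExt.inl b ^ 2 * (l2 * dualConj l2) = 0)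
    (h2 : a * dualConj l0 * l2 + TrivSqZeroExt.inl b * dualConj l1 * l0 +
      TrivSqZeroExt.inl b ^ 2 * dualConj l2 * l1 = 0) :
    l0.fst = 0 ∧ l1.fst = 0 ∧ l2.fst = 0 := by
  have e0 := congrArg TrivSqZeroExt.fst hab
  have e1 := congrArg TrivSqZeroExt.fst h1
  have e2 := congrArg TrivSqZeroExt.fst h2
  have e3 := congrArg TrivSqZeroExt.snd h2
  simp [dualConj, pow_two] at e0 e1 e2 e3
  generalize l0.fst = x0 at *
  generalize l1.fst = x1 at *
  generalize l2.fst = x2 at *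
  generalize l0.snd = y0 at *
  generalize l1.snd = y1 at *
  generalize l2.snd = y2 at *
  generalize a.fst = a0 at *
  generalize a.snd = a1 at *
  obtain ⟨c, rfl⟩ : ∃ c, a0 = c * b := ⟨a0 / b, by field_simp⟩
  have hbc : b = c ^ 2 := by
    apply mul_left_cancel₀ (pow_ne_zero 2 hb)
    linear_combination -e0
  subst hbc
  have hc : c ≠ 0 := fun h => hb (by simp [h])
  obtain ⟨hXY, hYZ⟩ := eq_of_sum_sq_eq_zero hcard (X := x0) (Y := c * x1) (Z := c ^ 2 * x2)
    (by linear_combination e1)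
    (by
      apply mul_left_cancel₀ hc
      linear_combination e2)
  have hx1 : x1 = c * x2 := by
    apply mul_left_cancel₀ hc
    linear_combination hYZ
  subst hx1
  subst hXY
  have hx2 : x2 = 0 := by
    have : a1 * c ^ 2 * x2 ^ 2 = 0 := by linear_combination e3
    simpa [ha1, hc] using this
  simp [hx2]
end
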